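/- Let H and E be finite-dimensional Euclidean spaces, X ⊂ H and K ⊂ E compact subsets containing the origins, and S: H × E → H a C²-smooth map with S(0,0) = 0 and S(X × K) ⊂ X. Assume that the RDS u_k = S(u_{k−1}, η_k) satisfies: (Dissipativity) for every ε > 0 there is n_ε ≥ 1 such that |S_{n_ε}(u; 0, …, 0)| ≤ ε for all u ∈ X; (Linearised controllability) D_η S(u, η): E → H is surjective for every u ∈ X and η ∈ K. Let {η_k, k ∈ ℤ} be a stationary process in E with D(η_k) supported by K, let 𝐊 = K^{ℤ₋} with the weighted metric d(𝛏, 𝛏′) = Σ_{k ∈ ℤ₋} ι^k |ξ_k − ξ′_k| (ι > 1 fixed), let σ be the law of (η_k, k ∈ ℤ₋), ℰ = supp σ ⊂ 𝐊, and let Q(𝛏;·) be the conditional law of η₁ given the past η_k = ξ_k, k ∈ ℤ₋, chosen continuous from ℰ to P(K) (Feller property). Assume further: (Lipschitz regularity) there is a function ρ: ℰ × E → ℝ₊, Lipschitz continuous in both variables, such that Q(𝛏; dy) = ρ(𝛏, y) ℓ(dy) for all 𝛏 ∈ ℰ; (Recurrence to zero) for every n ≥ 1 and δ > 0 there is s ≥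 1 such that inf_{𝛏 ∈ ℰ} 𝐐_s^n(𝛏; O_δ(0_n)) > 0, where 𝐐_s^n(𝛏;·) is the projection to the last n components of the conditional law 𝐐_{s+n}(𝛏;·) of (η₁, …, η_{s+n}) given the past 𝛏, and O_δ(0_n) is the n-fold product of B_E(0, δ). Then there exist a translation-invariant measure 𝛍 on X^ℤ and γ > 0 such that for every m ≥ 0 there is C_m > 0, not depending on the initial state, such that for every u ∈ X the trajectory {u_k} of u_k = S(u_{k−1}, η_k), u_0 = u, satisfies ‖D([u_k, …, u_{k+m}]) − 𝛍_m‖_var ≤ C_m e^{−γ k} for all k ≥ 0, where 𝛍_m is the projection of 𝛍 to X^{m+1}. -/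

import Mathlib

open MeasureTheory ProbabilityTheory Set Metric

/-- The trajectory of the system `u_k = S(u_{k-1}, ζ_k)` issued from `u₀`. -/
def traj {H E : Type*} (S : H × E → H) (u₀ : H) (ζ : ℕ → E) : ℕ → H
  | 0 => u₀
  | k + 1 => S (traj S u₀ ζ k, ζ (k + 1))

/-- The support of a measure on a topological space. -/
def msupport {α : Type*} [TopologicalSpace α] [MeasurableSpace α] (σ : Measure α) : Set α :=
  {x | ∀ U : Set α, IsOpen U → x ∈ U → 0 < σ U}

/-- A past `ξp = (ξ_k, k ≤ 0)` (encoded by `ξp n = ξ_{-n}`) updated by a new observation `y`. -/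
def seqAppend {E : Type*} (ξp : ℕ → E) (y : E) : ℕ → E
  | 0 => y
  | n + 1 => ξp n

/-- The weighted metric `d(ξp,ξp') = Σ_{k ∈ ℤ₋} ι^k |ξ_k − ξ'_k|` on the space of pasts
(encoded by `ξp n = ξ_{-n}`). -/
noncomputable def dPast {E : Type*} [NormedAddCommGroup E] (ι : ℝ) (x y : ℕ → E) : ℝ :=
  ∑' n : ℕ, (ι ^ n)⁻¹ * ‖x n - y n‖

/-- The conditional law `𝐐_k(ξp; dy₁, …, dy_k) = Q(ξp; dy₁) Q((ξp,y₁); dy₂) ⋯` of the next `k`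
observations given the past `ξp`. -/
noncomputable def Qchain {E : Type*} [MeasurableSpace E]
    (Q : (ℕ → E) → Measure E) : (k : ℕ) → (ℕ → E) → Measure (Fin k → E)
  | 0, _ => Measure.dirac (fun i : Fin 0 => i.elim0)
  | k + 1, ξp => (Q ξp).bind fun y => (Qchain Q k (seqAppend ξp y)).map (Fin.cons y)

/-
Adjoining to the state `u_k` all past states and noise values turns the system into a Markov chain.
Its transition operator is studied through two quantities: the oscillation of a function over all
admissible histories, and its Lipschitz constant in the noise past when the states are kept fixed.
Shifting the noise past by one step multiplies distances by `ι⁻¹`, and the density of the next noise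
value is Lipschitz in the past, so the second quantity contracts up to a multiple of the first.
The first one contracts by coupling: recurrence and dissipativity bring any two histories to states
and pasts close to zero with uniformly positive probability, and there linearised controllability
lets a change of the noise absorb a difference of the states, so that with positive probability the
next states coincide. It suffices to couple the current states, since by the Markov property their
decay of oscillation controls windows of states as well. The resulting exponential bound is uniform
over the initial histories, so the laws of the windows are Cauchy in total variation; compactness
of `X` provides a shift-invariant measure with the limits as its marginals.
-/

section Coupling

variable {α β : Type*} [MeasurableSpace α] [MeasurableSpace β]

lemma integral_le_integral_comp_add {Q : Measure α} [IsProbabilityMeasure Q] {ν : Measure β}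
    {g : β → α} (hg : AEMeasurable g ν) (hle : ν.map g ≤ Q) {h : α → ℝ} (hi : Integrable h Q)
    {c : ℝ} (hc : ∀ᵐ x ∂Q, h x ≤ c) :
    ∫ x, h x ∂Q ≤ ∫ b, h (g b) ∂ν + c * (1 - ν.real univ) := by
  have : IsFiniteMeasure (ν.map g) := isFiniteMeasure_of_le Q hle
  have hi' : Integrable h (ν.map g) := hi.mono_measure hle
  have hmass : (ν.map g).real univ = ν.real univ := by
    rw [measureReal_def, Measure.map_apply_of_aemeasurable hg .univ, preimage_univ,
      measureReal_def]
  have hmono : ∫ x, (c - h x) ∂(ν.map g) ≤ ∫ x, (c - h x) ∂Q := by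
    refine integral_mono_measure hle ?_ ((integrable_const c).sub hi)
    filter_upwards [hc] with x hx using sub_nonneg.2 hx
  rw [integral_sub (integrable_const c) hi, integral_sub (integrable_const c) hi',
    integral_map hg hi'.1] at hmono
  simp only [integral_const, hmass, probReal_univ, smul_eq_mul] at hmono
  linarith

lemma integral_comp_add_le_integral {Q : Measure α} [IsProbabilityMeasure Q] {ν : Measure β}
    {g : β → α} (hg : AEMeasurable g ν) (hle : ν.map g ≤ Q) {h : α → ℝ} (hi : Integrable h Q)
    {c : ℝ} (hc : ∀ᵐ x ∂Q, c ≤ h x) :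
    ∫ b, h (g b) ∂ν + c * (1 - ν.real univ) ≤ ∫ x, h x ∂Q := by
  have hneg := integral_le_integral_comp_add hg hle hi.neg
    (hc.mono fun x hx => neg_le_neg hx : ∀ᵐ x ∂Q, (-h) x ≤ -c)
  simp only [Pi.neg_apply, integral_neg] at hneg
  linarith

lemma integral_sub_integral_le_of_common_part {Q Q' : Measure α} [IsProbabilityMeasure Q]
    [IsProbabilityMeasure Q'] {ν : Measure β} [IsFiniteMeasure ν] {g g' : β → α}
    (hg : AEMeasurable g ν) (hg' : AEMeasurable g' ν) (hle : ν.map g ≤ Q)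
    (hle' : ν.map g' ≤ Q') {h h' : α → ℝ} (hi : Integrable h Q) (hi' : Integrable h' Q')
    {s s' : Set α} (hs : ∀ᵐ x ∂Q, x ∈ s) (hs' : ∀ᵐ x ∂Q', x ∈ s') {a t : ℝ}
    (ha : ∀ x ∈ s, ∀ x' ∈ s', h x - h' x' ≤ a) (ht : ∀ᵐ b ∂ν, h (g b) - h' (g' b) ≤ t) :
    ∫ x, h x ∂Q - ∫ x, h' x ∂Q' ≤ t * ν.real univ + a * (1 - ν.real univ) := by
  obtain ⟨x₀, hx₀⟩ := hs.exists
  obtain ⟨x₀', hx₀'⟩ := hs'.exists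
  have hbdd : BddAbove (h '' s) :=
    ⟨a + h' x₀', forall_mem_image.2 fun x hx => by linarith [ha x hx x₀' hx₀']⟩
  have hupper := integral_le_integral_comp_add hg hle hi (c := sSup (h '' s))
    (hs.mono fun x hx => le_csSup hbdd (mem_image_of_mem h hx))
  have hlower := integral_comp_add_le_integral hg' hle' hi' (c := sSup (h '' s) - a)
    (hs'.mono fun x' hx' => sub_le_iff_le_add.2 <| csSup_le ⟨_, mem_image_of_mem h hx₀⟩ <|
      forall_mem_image.2 fun x hx => by linarith [ha x hx x' hx'])
  have hint : Integrable (fun b => h (g b)) ν := (hi.mono_measure hle).comp_aemeasurable hg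
  have hint' : Integrable (fun b => h' (g' b)) ν := (hi'.mono_measure hle').comp_aemeasurable hg'
  have hcommon : ∫ b, (h (g b) - h' (g' b)) ∂ν ≤ ∫ _, t ∂ν :=
    integral_mono_ae (hint.sub hint') (integrable_const t) ht
  rw [integral_sub hint hint', integral_const, smul_eq_mul] at hcommon
  linarith

lemma smul_cond_le {Q : Measure α} {B : Set α} (hB : MeasurableSet B) {p : ENNReal}
    (hpB : p ≤ Q B) : p • Q[|B] ≤ Q := by
  refine Measure.le_iff.2 fun A _ => ?_
  rw [Measure.smul_apply, smul_eq_mul, cond_apply hB, ← mul_assoc]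
  calc p * (Q B)⁻¹ * Q (B ∩ A) ≤ 1 * Q A := by
        gcongr
        · exact ENNReal.div_le_of_le_mul (by rwa [one_mul])
        · exact inter_subset_right
    _ = Q A := one_mul _

lemma integral_sub_integral_le_of_subsets {Q Q' : Measure α} [IsProbabilityMeasure Q]
    [IsProbabilityMeasure Q'] {h h' : α → ℝ} (hi : Integrable h Q) (hi' : Integrable h' Q')
    {s s' : Set α} (hs : ∀ᵐ x ∂Q, x ∈ s) (hs' : ∀ᵐ x ∂Q', x ∈ s') {a t : ℝ}
    (ha : ∀ x ∈ s, ∀ x' ∈ s', h x - h' x' ≤ a) {B B' : Set α} (hB : MeasurableSet B)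
    (hB' : MeasurableSet B') (ht : ∀ x ∈ B ∩ s, ∀ x' ∈ B' ∩ s', h x - h' x' ≤ t)
    {p : ℝ} (hp : 0 < p) (hpB : p ≤ Q.real B) (hpB' : p ≤ Q'.real B') :
    ∫ x, h x ∂Q - ∫ x, h' x ∂Q' ≤ t * p + a * (1 - p) := by
  have hpQ : ENNReal.ofReal p ≤ Q B := ENNReal.ofReal_le_of_le_toReal hpB
  have hpQ' : ENNReal.ofReal p ≤ Q' B' := ENNReal.ofReal_le_of_le_toReal hpB'
  have hpos : 0 < ENNReal.ofReal p := ENNReal.ofReal_pos.2 hp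
  have := cond_isProbabilityMeasure (hpos.trans_le hpQ).ne'
  have := cond_isProbabilityMeasure (hpos.trans_le hpQ').ne'
  set ν : Measure (α × α) := ENNReal.ofReal p • (Q[|B]).prod (Q'[|B'])
  have : IsFiniteMeasure ν := Measure.smul_finite _ ENNReal.ofReal_ne_top
  have hfst : ν.map Prod.fst = ENNReal.ofReal p • Q[|B] := by
    rw [Measure.map_smul, measurePreserving_fst.map_eq]
  have hsnd : ν.map Prod.snd = ENNReal.ofReal p • Q'[|B'] := by
    rw [Measure.map_smul, measurePreserving_snd.map_eq]
  have hmass : ν.real univ = p := by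
    simp [ν, measureReal_def, ENNReal.toReal_ofReal hp.le]
  have hBs : ∀ᵐ x ∂(Q[|B]), x ∈ B ∩ s :=
    (ae_cond_mem hB).and (cond_absolutelyContinuous.ae_le hs)
  have hBs' : ∀ᵐ x ∂(Q'[|B']), x ∈ B' ∩ s' :=
    (ae_cond_mem hB').and (cond_absolutelyContinuous.ae_le hs')
  rw [← hmass]
  refine integral_sub_integral_le_of_common_part (ν := ν) measurable_fst.aemeasurable
    measurable_snd.aemeasurable (hfst ▸ smul_cond_le hB hpQ) (hsnd ▸ smul_cond_le hB' hpQ')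
    hi hi' hs hs' ha (Measure.ae_smul_measure ?_ _)
  filter_upwards [measurePreserving_fst.quasiMeasurePreserving.ae hBs,
    measurePreserving_snd.quasiMeasurePreserving.ae hBs'] with b hb hb' using ht _ hb _ hb'

end Coupling

section Past

lemma seqAppend_tail {E : Type*} (x : ℕ → E) : seqAppend (fun n => x (n + 1)) (x 0) = x := by
  funext n
  cases n <;> rfl

lemma measurable_seqAppend {E : Type*} [MeasurableSpace E] :
    Measurable fun p : (ℕ → E) × E => seqAppend p.1 p.2 :=
  measurable_pi_lambda _ fun
    | 0 => measurable_snd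
    | n + 1 => (measurable_pi_apply n).comp measurable_fst

lemma continuous_seqAppend {E : Type*} [TopologicalSpace E] :
    Continuous fun p : (ℕ → E) × E => seqAppend p.1 p.2 :=
  continuous_pi fun
    | 0 => continuous_snd
    | n + 1 => (continuous_apply n).comp continuous_fst

variable {E : Type*} [NormedAddCommGroup E] {ι : ℝ} {K : Set E} {x y z : ℕ → E}

lemma inv_pow_mul_norm_sub_le (hι : 0 ≤ ι) (hK : Bornology.IsBounded K) (hx : ∀ n, x n ∈ K)
    (hy : ∀ n, y n ∈ K) (n : ℕ) : (ι ^ n)⁻¹ * ‖x n - y n‖ ≤ ι⁻¹ ^ n * diam K := by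
  rw [inv_pow, ← dist_eq_norm]
  gcongr
  exact dist_le_diam_of_mem hK (hx n) (hy n)

lemma summable_inv_pow_mul (hι : 1 < ι) (c : ℝ) : Summable fun n : ℕ => ι⁻¹ ^ n * c :=
  (summable_geometric_of_lt_one (by positivity) (inv_lt_one_of_one_lt₀ hι)).mul_right c

lemma summable_dPast (hι : 1 < ι) (hK : Bornology.IsBounded K) (hx : ∀ n, x n ∈ K)
    (hy : ∀ n, y n ∈ K) : Summable fun n : ℕ => (ι ^ n)⁻¹ * ‖x n - y n‖ :=
  .of_nonneg_of_le (fun n => by positivity) (inv_pow_mul_norm_sub_le (by positivity) hK hx hy)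
    (summable_inv_pow_mul hι _)

lemma dPast_nonneg (hι : 0 ≤ ι) (x y : ℕ → E) : 0 ≤ dPast ι x y :=
  tsum_nonneg fun n => by positivity

lemma dPast_self (ι : ℝ) (x : ℕ → E) : dPast ι x x = 0 := by simp [dPast]

lemma dPast_comm (ι : ℝ) (x y : ℕ → E) : dPast ι x y = dPast ι y x := by
  simp only [dPast, norm_sub_rev]

lemma dPast_triangle (hι : 1 < ι) (hK : Bornology.IsBounded K) (hx : ∀ n, x n ∈ K)
    (hy : ∀ n, y n ∈ K) (hz : ∀ n, z n ∈ K) : dPast ι x z ≤ dPast ι x y + dPast ι y z := by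
  have hxy := summable_dPast hι hK hx hy
  have hyz := summable_dPast hι hK hy hz
  rw [dPast, dPast, dPast, ← hxy.tsum_add hyz]
  refine (summable_dPast hι hK hx hz).tsum_le_tsum (fun n => ?_) (hxy.add hyz)
  rw [← mul_add]
  gcongr
  exact norm_sub_le_norm_sub_add_norm_sub _ _ _

lemma dPast_seqAppend (hι : 1 < ι) (hK : Bornology.IsBounded K) (hx : ∀ n, x n ∈ K)
    (hy : ∀ n, y n ∈ K) (u v : E) :
    dPast ι (seqAppend x u) (seqAppend y v) = ‖u - v‖ + ι⁻¹ * dPast ι x y := by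
  have hsucc : ∀ n, (ι ^ (n + 1))⁻¹ * ‖seqAppend x u (n + 1) - seqAppend y v (n + 1)‖ =
      ι⁻¹ * ((ι ^ n)⁻¹ * ‖x n - y n‖) := fun n => by
    rw [seqAppend, seqAppend, pow_succ', mul_inv, mul_assoc]
  have hsum : Summable fun n : ℕ => (ι ^ n)⁻¹ * ‖seqAppend x u n - seqAppend y v n‖ :=
    (summable_nat_add_iff 1).1 <|
      ((summable_dPast hι hK hx hy).mul_left ι⁻¹).congr fun n => (hsucc n).symm
  rw [dPast, dPast, hsum.tsum_eq_zero_add, ← tsum_mul_left, tsum_congr hsucc]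
  simp [seqAppend]

lemma continuousOn_dPast (hι : 1 < ι) (hK : Bornology.IsBounded K) (hy : ∀ n, y n ∈ K) :
    ContinuousOn (fun x => dPast ι x y) {x : ℕ → E | ∀ n, x n ∈ K} := by
  refine continuousOn_tsum (fun n => by fun_prop) (summable_inv_pow_mul hι (diam K)) ?_
  intro n x hx
  rw [Real.norm_of_nonneg (by positivity)]
  exact inv_pow_mul_norm_sub_le (by positivity) hK hx hy n

lemma tendsto_zero_of_recent_small {x : ℕ → ℕ → E}
    (hx : ∀ n, ∀ j ≤ n, ‖x n j‖ < 1 / ((n : ℝ) + 1)) :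
    Filter.Tendsto x Filter.atTop (nhds 0) := by
  refine tendsto_pi_nhds.2 fun j => squeeze_zero_norm' ?_ tendsto_one_div_add_atTop_nhds_zero_nat
  filter_upwards [Filter.eventually_ge_atTop j] with n hn using (hx n j hn).le

lemma exists_forall_dPast_zero_lt (hι : 1 < ι) (hK : Bornology.IsBounded K) (h0 : (0 : E) ∈ K)
    {τ : ℝ} (hτ : 0 < τ) :
    ∃ n : ℕ, ∃ δ > 0, ∀ x : ℕ → E, (∀ k, x k ∈ K) → (∀ j < n, ‖x j‖ < δ) →
      dPast ι x 0 < τ := by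
  by_contra! hcon
  choose x hxK hsmall hfar using fun n : ℕ => hcon (n + 1) (1 / ((n : ℝ) + 1)) (by positivity)
  have hlim : Filter.Tendsto x Filter.atTop (nhdsWithin 0 {x | ∀ n, x n ∈ K}) :=
    tendsto_nhdsWithin_iff.2 ⟨tendsto_zero_of_recent_small fun n j hj =>
      hsmall n j (Nat.lt_succ_of_le hj), .of_forall hxK⟩
  have hd := (continuousOn_dPast hι hK (fun _ => h0) 0 fun _ => h0).tendsto.comp hlim
  rw [show (fun _ : ℕ => (0 : E)) = 0 from rfl, dPast_self] at hd
  obtain ⟨n, hn⟩ := (hd.eventually_lt_const hτ).exists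
  exact (hfar n).not_gt hn

end Past

section Straightening

variable {H F E : Type*} [NormedAddCommGroup H] [NormedSpace ℝ H] [NormedAddCommGroup F]
  [NormedSpace ℝ F] [NormedAddCommGroup E] [NormedSpace ℝ E]

lemma lipschitzOnWith_invFunOn_of_approximatesLinearOn_id {f : E → E} {V : Set E} {c : NNReal}
    (hf : ApproximatesLinearOn f (.id ℝ E) V c) (hc : c ≤ 1 / 2) :
    LipschitzOnWith 2 (Function.invFunOn f V) (f '' V) := by
  refine LipschitzOnWith.of_dist_le_mul ?_
  intro b hb b' hb'
  set y := Function.invFunOn f V b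
  set y' := Function.invFunOn f V b'
  have hy : f y = b := Function.invFunOn_eq hb
  have hy' : f y' = b' := Function.invFunOn_eq hb'
  have happrox : ‖f y - f y' - (y - y')‖ ≤ c * ‖y - y'‖ :=
    hf y (Function.invFunOn_mem hb) y' (Function.invFunOn_mem hb')
  have htri : ‖y - y'‖ ≤ ‖f y - f y'‖ + ‖f y - f y' - (y - y')‖ := by
    simpa using norm_sub_le (f y - f y') (f y - f y' - (y - y'))
  have hc' : c * ‖y - y'‖ ≤ 1 / 2 * ‖y - y'‖ := by
    gcongr
    exact_mod_cast hc
  rw [dist_eq_norm, dist_eq_norm, ← hy, ← hy', NNReal.coe_ofNat]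
  linarith

lemma exists_map_invFunOn_le [FiniteDimensional ℝ E] [MeasurableSpace E] [BorelSpace E]
    (μ : Measure E) [μ.IsAddHaarMeasure] :
    ∃ c : NNReal, 0 < c ∧ c ≤ 1 / 2 ∧ ∀ (f : E → E) (V B : Set E),
      ApproximatesLinearOn f (.id ℝ E) V c → MeasurableSet V → MeasurableSet B → B ⊆ f '' V →
      AEMeasurable (Function.invFunOn f V) (μ.restrict B) ∧
        (μ.restrict B).map (Function.invFunOn f V) ≤ (2 : ENNReal) • μ.restrict V := by
  have hdet : ENNReal.ofReal |(ContinuousLinearMap.id ℝ E).det| < (2 : NNReal) := by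
    simp [ContinuousLinearMap.det]
  obtain ⟨c, hcvol, hcle, hcpos⟩ := ((addHaar_image_le_mul_of_det_lt μ _ hdet).and <|
    (eventually_nhdsWithin_of_eventually_nhds (eventually_le_nhds (by norm_num :
      (0 : NNReal) < 1 / 2))).and self_mem_nhdsWithin).exists
  refine ⟨c, hcpos, hcle, fun f V B hf hV hB hBV => ?_⟩
  have hmeas : AEMeasurable (Function.invFunOn f V) (μ.restrict B) :=
    ((lipschitzOnWith_invFunOn_of_approximatesLinearOn_id hf hcle).mono hBV).continuousOn
      |>.aemeasurable hB
  refine ⟨hmeas, Measure.le_iff.2 fun Γ hΓ => ?_⟩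
  have hsub : Function.invFunOn f V ⁻¹' Γ ∩ B ⊆ f '' (Γ ∩ V) := fun b ⟨hbΓ, hbB⟩ =>
    ⟨_, ⟨hbΓ, Function.invFunOn_mem (hBV hbB)⟩, Function.invFunOn_eq (hBV hbB)⟩
  rw [Measure.map_apply_of_aemeasurable hmeas hΓ, Measure.restrict_apply' hB,
    Measure.smul_apply, Measure.restrict_apply' hV]
  exact (measure_mono hsub).trans (hcvol _ f (hf.mono_set inter_subset_right))

lemma approximatesLinearOn_id_section {f : H × E → E} {f' : H × E →L[ℝ] E} {u₀ : H} {y₀ : E}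
    (hf : HasStrictFDerivAt f f' (u₀, y₀)) (hf' : ∀ y, f' (0, y) = y) {c : NNReal} (hc : 0 < c)
    {U : Set E} (hU : U ∈ nhds y₀) :
    ∃ r > 0, closedBall y₀ r ⊆ U ∧ ∀ᶠ v in nhds u₀,
      ApproximatesLinearOn (fun y => f (v, y)) (.id ℝ E) (closedBall y₀ r) c := by
  obtain ⟨W, hW, hfW⟩ := hf.approximates_deriv_on_nhds (.inr hc)
  obtain ⟨V₁, hV₁, V₂, hV₂, hVW⟩ := mem_nhds_prod_iff.1 hW
  obtain ⟨r, hr, hrU⟩ := nhds_basis_closedBall.mem_iff.1 (Filter.inter_mem hU hV₂)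
  refine ⟨r, hr, fun y hy => (hrU hy).1, ?_⟩
  filter_upwards [hV₁] with v hv y hy y' hy'
  simpa [hf'] using hfW (v, y) (hVW ⟨hv, (hrU hy).2⟩) (v, y') (hVW ⟨hv, (hrU hy').2⟩)

lemma surjOn_closedBall_of_approximatesLinearOn_id [CompleteSpace E] {f : E → E} {y₀ : E}
    {r : ℝ} (hr : 0 ≤ r) {c : NNReal} (hc : c ≤ 1 / 2)
    (hf : ApproximatesLinearOn f (.id ℝ E) (closedBall y₀ r) c) :
    closedBall (f y₀) (r / 2) ⊆ f '' closedBall y₀ r := by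
  let idInv : (ContinuousLinearMap.id ℝ E).NonlinearRightInverse :=
    { toFun := id, nnnorm := 1, bound' := by simp, right_inv' := by simp }
  refine (closedBall_subset_closedBall ?_).trans
    (hf.surjOn_closedBall_of_nonlinearRightInverse idInv hr subset_rfl)
  have : (c : ℝ) ≤ 1 / 2 := by exact_mod_cast hc
  have : (1 / 2 : ℝ) * r ≤ (((1 : NNReal) : ℝ)⁻¹ - c) * r := by
    gcongr
    norm_num
    linarith
  linarith

lemma exists_common_image_of_hasStrictFDerivAt [FiniteDimensional ℝ F] [FiniteDimensional ℝ E]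
    [MeasurableSpace E] [BorelSpace E] (μ : Measure E) [μ.IsAddHaarMeasure] {S : H × E → F}
    {S' : H × E →L[ℝ] F} {u₀ : H} {y₀ : E} (hS : HasStrictFDerivAt S S' (u₀, y₀))
    (hsurj : Function.Surjective (S'.comp (ContinuousLinearMap.inr ℝ H E))) {U : Set E}
    (hU : U ∈ nhds y₀) :
    ∃ (ν : Measure E) (A : E → F) (g : H → E → E), IsFiniteMeasure ν ∧ ν ≠ 0 ∧
      ∀ᶠ v in nhds u₀, AEMeasurable (g v) ν ∧ (∀ᵐ b ∂ν, S (v, g v b) = A b) ∧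
        ν.map (g v) ≤ μ.restrict U := by
  have : CompleteSpace E := FiniteDimensional.complete ℝ E
  set A : E →L[ℝ] F := S'.comp (ContinuousLinearMap.inr ℝ H E)
  obtain ⟨T, hT⟩ := A.exists_rightInverse_of_surjective (LinearMap.range_eq_top.2 hsurj)
  -- `f` straightens `S` (that is, `A ∘ f = S`), and its partial derivative in `y` is the identity.
  set f : H × E → E := fun p => p.2 + T (S p - A p.2)
  have hAf : ∀ p, A (f p) = S p := fun p => by
    have hAT : A (T (S p - A p.2)) = S p - A p.2 := DFunLike.congr_fun hT _
    rw [map_add, hAT, add_sub_cancel]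
  have hf : HasStrictFDerivAt f (ContinuousLinearMap.snd ℝ H E +
      T.comp (S' - A.comp (ContinuousLinearMap.snd ℝ H E))) (u₀, y₀) :=
    hasStrictFDerivAt_snd.add <| T.hasStrictFDerivAt.comp (u₀, y₀) <|
      hS.sub <| A.hasStrictFDerivAt.comp (u₀, y₀) hasStrictFDerivAt_snd
  obtain ⟨c, hc, hc2, hvol⟩ := exists_map_invFunOn_le μ
  obtain ⟨r, hr, hrU, happrox⟩ := approximatesLinearOn_id_section hf (by simp [A]) hc hU
  set B := ball (f (u₀, y₀)) (r / 4)
  refine ⟨(2 : ENNReal)⁻¹ • μ.restrict B, A,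
    fun v => Function.invFunOn (fun y => f (v, y)) (closedBall y₀ r), ?_, ?_, ?_⟩
  · have : IsFiniteMeasure (μ.restrict B) := ⟨by simpa [B] using measure_ball_lt_top⟩
    exact Measure.smul_finite _ (by simp)
  · have hB : μ B ≠ 0 := (measure_ball_pos μ _ (by positivity)).ne'
    rw [← Measure.measure_univ_ne_zero]
    simpa using hB
  have hcont : ContinuousAt (fun v => f (v, y₀)) u₀ :=
    hf.continuousAt.comp (f := fun v => (v, y₀)) (by fun_prop)
  filter_upwards [happrox, hcont (ball_mem_nhds _ (by positivity : 0 < r / 4))] with v hv hvB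
  have hBsub : B ⊆ (fun y => f (v, y)) '' closedBall y₀ r := by
    refine Subset.trans ?_ (surjOn_closedBall_of_approximatesLinearOn_id hr.le hc2 hv)
    refine ball_subset_closedBall.trans (closedBall_subset_closedBall' ?_)
    rw [dist_comm]
    linarith [mem_ball.1 hvB]
  obtain ⟨hmeas, hmap⟩ := hvol _ _ B hv measurableSet_closedBall measurableSet_ball hBsub
  refine ⟨hmeas.smul_measure _, Measure.ae_smul_measure ?_ _, ?_⟩
  · filter_upwards [ae_restrict_mem measurableSet_ball] with b hb
    rw [← hAf, Function.invFunOn_eq (hBsub hb)]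
  · rw [Measure.map_smul]
    calc (2 : ENNReal)⁻¹ • (μ.restrict B).map _
        ≤ (2 : ENNReal)⁻¹ • (2 : ENNReal) • μ.restrict (closedBall y₀ r) := by gcongr
      _ = μ.restrict (closedBall y₀ r) := by
        rw [smul_smul, ENNReal.inv_mul_cancel (by simp) (by simp), one_smul]
      _ ≤ μ.restrict U := Measure.restrict_mono hrU le_rfl

end Straightening

section Noise

/-- The standing assumptions on the noise: for every past `ξ` in the closed set `𝓔` of admissible
ones, the next value has law `κ ξ`, lies in the compact set `K`, keeps the past admissible, and has
a density `ρ ξ` with respect to the volume; `L` is a Lipschitz constant of `ρ` on `𝓔 × E`. -/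
structure LipschitzNoise {E : Type*} [NormedAddCommGroup E] [MeasureSpace E] (K : Set E)
    (𝓔 : Set (ℕ → E)) (ι L : ℝ) (ρ : (ℕ → E) → E → ℝ) (κ : Kernel (ℕ → E) E) : Prop where
  one_lt : 1 < ι
  isCompact : IsCompact K
  isClosed : IsClosed 𝓔
  mem : ∀ ξ ∈ 𝓔, ∀ n, ξ n ∈ K
  seqAppend_mem : ∀ ξ ∈ 𝓔, ∀ᵐ y ∂κ ξ, seqAppend ξ y ∈ 𝓔
  density_nonneg : ∀ ξ y, 0 ≤ ρ ξ y
  eq_withDensity : ∀ ξ ∈ 𝓔, κ ξ = volume.withDensity fun y => ENNReal.ofReal (ρ ξ y)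
  lipschitz_nonneg : 0 ≤ L
  abs_density_sub_le : ∀ ξ ∈ 𝓔, ∀ ξ' ∈ 𝓔, ∀ y y',
    |ρ ξ y - ρ ξ' y'| ≤ L * (dPast ι ξ ξ' + ‖y - y'‖)

namespace LipschitzNoise

variable {E : Type*} [NormedAddCommGroup E] [MeasureSpace E] {K : Set E} {𝓔 : Set (ℕ → E)}
  {ι L : ℝ} {ρ : (ℕ → E) → E → ℝ} {κ : Kernel (ℕ → E) E} {ξ ξ' : ℕ → E}

lemma ae_mem (N : LipschitzNoise K 𝓔 ι L ρ κ) (hξ : ξ ∈ 𝓔) : ∀ᵐ y ∂κ ξ, y ∈ K := by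
  filter_upwards [N.seqAppend_mem ξ hξ] with y hy using N.mem _ hy 0

lemma dPast_nonneg (N : LipschitzNoise K 𝓔 ι L ρ κ) (ξ ξ' : ℕ → E) : 0 ≤ dPast ι ξ ξ' :=
  _root_.dPast_nonneg (zero_le_one.trans N.one_lt.le) ξ ξ'

lemma dPast_seqAppend (N : LipschitzNoise K 𝓔 ι L ρ κ) (hξ : ξ ∈ 𝓔) (hξ' : ξ' ∈ 𝓔) (y y' : E) :
    dPast ι (seqAppend ξ y) (seqAppend ξ' y') = ‖y - y'‖ + ι⁻¹ * dPast ι ξ ξ' :=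
  _root_.dPast_seqAppend N.one_lt N.isCompact.isBounded (N.mem ξ hξ) (N.mem ξ' hξ') y y'

lemma dPast_triangle (N : LipschitzNoise K 𝓔 ι L ρ κ) {x y z : ℕ → E} (hx : x ∈ 𝓔) (hy : y ∈ 𝓔)
    (hz : z ∈ 𝓔) : dPast ι x z ≤ dPast ι x y + dPast ι y z :=
  _root_.dPast_triangle N.one_lt N.isCompact.isBounded (N.mem x hx) (N.mem y hy) (N.mem z hz)

lemma inv_lt_one (N : LipschitzNoise K 𝓔 ι L ρ κ) : ι⁻¹ < 1 := inv_lt_one_of_one_lt₀ N.one_lt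

lemma inv_pos (N : LipschitzNoise K 𝓔 ι L ρ κ) : 0 < ι⁻¹ :=
  _root_.inv_pos.2 (zero_lt_one.trans N.one_lt)

lemma smul_restrict_le (N : LipschitzNoise K 𝓔 ι L ρ κ) (hξ : ξ ∈ 𝓔) {U : Set E}
    (hU : MeasurableSet U) {c : ℝ} (hc : ∀ y ∈ U, c ≤ ρ ξ y) :
    ENNReal.ofReal c • volume.restrict U ≤ κ ξ := by
  refine Measure.le_iff.2 fun A hA => ?_
  rw [N.eq_withDensity ξ hξ, Measure.smul_apply, Measure.restrict_apply hA,
    withDensity_apply _ hA, smul_eq_mul, ← setLIntegral_const]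
  exact (setLIntegral_mono' (hA.inter hU) fun y hy => ENNReal.ofReal_le_ofReal (hc y hy.2)).trans
    (lintegral_mono_set inter_subset_left)

variable [IsMarkovKernel κ] [BorelSpace E]

lemma setLIntegral_density_eq_one (N : LipschitzNoise K 𝓔 ι L ρ κ) (hξ : ξ ∈ 𝓔) :
    ∫⁻ y in K, ENNReal.ofReal (ρ ξ y) = 1 := by
  have hK := N.isCompact.measurableSet
  rw [← withDensity_apply _ hK, ← N.eq_withDensity ξ hξ, ← prob_compl_eq_zero_iff hK]
  exact N.ae_mem hξ

lemma exists_density_pos (N : LipschitzNoise K 𝓔 ι L ρ κ) (hξ : ξ ∈ 𝓔) : ∃ y ∈ K, 0 < ρ ξ y := by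
  by_contra! hcon
  have hone := N.setLIntegral_density_eq_one hξ
  rw [setLIntegral_congr_fun (g := fun _ => 0) N.isCompact.measurableSet
    fun y hy => ENNReal.ofReal_eq_zero.2 (hcon y hy), lintegral_zero] at hone
  exact zero_ne_one hone

lemma exists_smul_restrict_le (N : LipschitzNoise K 𝓔 ι L ρ κ) {ξ₀ : ℕ → E}
    (hξ₀ : ξ₀ ∈ 𝓔) : ∃ y₀ ∈ K, ∃ c > 0, ∃ τ > 0, ∀ ξ ∈ 𝓔, dPast ι ξ ξ₀ < τ →
      ENNReal.ofReal c • volume.restrict (ball y₀ τ) ≤ κ ξ := by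
  obtain ⟨y₀, hy₀, hpos⟩ := N.exists_density_pos hξ₀
  have hL := N.lipschitz_nonneg
  set τ := ρ ξ₀ y₀ / (4 * (L + 1))
  have hτ : 0 < τ := by positivity
  have hLτ : L * (τ + τ) ≤ ρ ξ₀ y₀ / 2 := by
    have hdef : ρ ξ₀ y₀ = τ * (4 * (L + 1)) := (div_mul_cancel₀ _ (by positivity)).symm
    linarith
  refine ⟨y₀, hy₀, ρ ξ₀ y₀ / 2, by positivity, τ, hτ, fun ξ hξ hd =>
    N.smul_restrict_le hξ measurableSet_ball fun y hy => ?_⟩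
  have hclose : L * (dPast ι ξ ξ₀ + ‖y - y₀‖) ≤ L * (τ + τ) := by
    gcongr
    rw [← dist_eq_norm]
    exact hy.le
  linarith [neg_abs_le (ρ ξ y - ρ ξ₀ y₀), N.abs_density_sub_le ξ hξ ξ₀ hξ₀ y y₀]

variable [IsFiniteMeasureOnCompacts (volume : Measure E)]

lemma one_sub_min_density_le (N : LipschitzNoise K 𝓔 ι L ρ κ) (hξ : ξ ∈ 𝓔) (hξ' : ξ' ∈ 𝓔)
    {ν : Measure E} [IsFiniteMeasure ν]
    (hν : ν = volume.withDensity fun y => ENNReal.ofReal (min (ρ ξ y) (ρ ξ' y))) :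
    1 - ν.real univ ≤ L * volume.real K * dPast ι ξ ξ' := by
  have hLd := mul_nonneg N.lipschitz_nonneg (N.dPast_nonneg ξ ξ')
  have hpt : ∀ y, ρ ξ y ≤ min (ρ ξ y) (ρ ξ' y) + L * dPast ι ξ ξ' := fun y => by
    have hlip := N.abs_density_sub_le ξ hξ ξ' hξ' y y
    rw [sub_self, norm_zero, add_zero] at hlip
    rw [← min_add_add_right]
    exact le_min (by linarith) (by linarith [le_abs_self (ρ ξ y - ρ ξ' y)])
  have hmass : 1 ≤ ν univ + ENNReal.ofReal (L * dPast ι ξ ξ') * volume K :=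
    calc 1 = ∫⁻ y in K, ENNReal.ofReal (ρ ξ y) := (N.setLIntegral_density_eq_one hξ).symm
      _ ≤ ∫⁻ y in K, (ENNReal.ofReal (min (ρ ξ y) (ρ ξ' y)) +
            ENNReal.ofReal (L * dPast ι ξ ξ')) := by
          gcongr with y
          rw [← ENNReal.ofReal_add (le_min (N.density_nonneg _ _) (N.density_nonneg _ _)) hLd]
          exact ENNReal.ofReal_le_ofReal (hpt y)
      _ = ν K + ENNReal.ofReal (L * dPast ι ξ ξ') * volume K := by
          rw [lintegral_add_right _ measurable_const, setLIntegral_const, hν,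
            withDensity_apply _ N.isCompact.measurableSet]
      _ ≤ _ := by gcongr; exact subset_univ K
  have hK : volume K ≠ ⊤ := N.isCompact.measure_lt_top.ne
  have hreal := ENNReal.toReal_mono (by finiteness) hmass
  rw [ENNReal.toReal_add (by finiteness) (by finiteness), ENNReal.toReal_mul,
    ENNReal.toReal_ofReal hLd, ENNReal.toReal_one] at hreal
  simp only [measureReal_def]
  linarith

lemma integral_sub_integral_le (N : LipschitzNoise K 𝓔 ι L ρ κ) (hξ : ξ ∈ 𝓔) (hξ' : ξ' ∈ 𝓔)
    {h h' : E → ℝ} (hi : Integrable h (κ ξ)) (hi' : Integrable h' (κ ξ')) {s s' : Set E}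
    (hs : ∀ᵐ y ∂κ ξ, y ∈ s) (hs' : ∀ᵐ y ∂κ ξ', y ∈ s') {a t : ℝ} (ha0 : 0 ≤ a) (ht0 : 0 ≤ t)
    (ha : ∀ y ∈ s, ∀ y' ∈ s', h y - h' y' ≤ a) (ht : ∀ y ∈ s ∩ s', h y - h' y ≤ t) :
    ∫ y, h y ∂κ ξ - ∫ y, h' y ∂κ ξ' ≤ t + a * (L * volume.real K * dPast ι ξ ξ') := by
  set ν : Measure E := volume.withDensity fun y => ENNReal.ofReal (min (ρ ξ y) (ρ ξ' y)) with hν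
  have hle : ν ≤ κ ξ := N.eq_withDensity ξ hξ ▸ withDensity_mono (.of_forall fun y =>
    ENNReal.ofReal_le_ofReal (min_le_left _ _))
  have hle' : ν ≤ κ ξ' := N.eq_withDensity ξ' hξ' ▸ withDensity_mono (.of_forall fun y =>
    ENNReal.ofReal_le_ofReal (min_le_right _ _))
  have : IsFiniteMeasure ν := isFiniteMeasure_of_le _ hle
  have hmass_le_one : ν.real univ ≤ 1 := by
    simpa [measureReal_def] using ENNReal.toReal_mono (measure_ne_top _ _) (hle univ)
  have hνs : ∀ᵐ y ∂ν, y ∈ s ∩ s' := by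
    filter_upwards [hle.absolutelyContinuous.ae_le hs, hle'.absolutelyContinuous.ae_le hs']
      with y hy hy' using ⟨hy, hy'⟩
  calc ∫ y, h y ∂κ ξ - ∫ y, h' y ∂κ ξ'
      ≤ t * ν.real univ + a * (1 - ν.real univ) :=
        integral_sub_integral_le_of_common_part (g := id) (g' := id) aemeasurable_id
          aemeasurable_id (by rwa [Measure.map_id]) (by rwa [Measure.map_id]) hi hi' hs hs' ha
          (hνs.mono ht)
    _ ≤ t * 1 + a * (L * volume.real K * dPast ι ξ ξ') := by
        gcongr
        exact N.one_sub_min_density_le hξ hξ' hν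
    _ = _ := by rw [mul_one]

end LipschitzNoise

end Noise

section MarkovOperator

variable {α β : Type*} [MeasurableSpace α] [MeasurableSpace β]

/-- Bounded measurable real functions, the observables on which Markov kernels act. -/
structure IsBoundedMeasurable (f : α → ℝ) : Prop where
  measurable : Measurable f
  exists_bound : ∃ C, ∀ a, ‖f a‖ ≤ C

lemma IsBoundedMeasurable.integrable {f : α → ℝ} (hf : IsBoundedMeasurable f) (μ : Measure α)
    [IsFiniteMeasure μ] : Integrable f μ :=
  let ⟨C, hC⟩ := hf.exists_bound
  .of_bound hf.measurable.aestronglyMeasurable C (.of_forall hC)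

lemma IsBoundedMeasurable.comp {f : β → ℝ} (hf : IsBoundedMeasurable f) {g : α → β}
    (hg : Measurable g) : IsBoundedMeasurable fun a => f (g a) :=
  ⟨hf.measurable.comp hg, let ⟨C, hC⟩ := hf.exists_bound; ⟨C, fun a => hC (g a)⟩⟩

lemma isBoundedMeasurable_indicator_one {s : Set α} (hs : MeasurableSet s) :
    IsBoundedMeasurable (s.indicator fun _ => (1 : ℝ)) :=
  ⟨measurable_const.indicator hs, 1, fun a =>
    (norm_indicator_le_norm_self _ a).trans_eq norm_one⟩

/-- The Markov operator of the kernel `κ`, acting on functions. -/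
noncomputable def markovOp (κ : Kernel α β) (f : β → ℝ) (a : α) : ℝ := ∫ b, f b ∂κ a

lemma IsBoundedMeasurable.markovOp {f : β → ℝ} (hf : IsBoundedMeasurable f) (κ : Kernel α β)
    [IsMarkovKernel κ] : IsBoundedMeasurable (markovOp κ f) := by
  obtain ⟨C, hC⟩ := hf.exists_bound
  refine ⟨hf.measurable.stronglyMeasurable.integral_kernel.measurable, C, fun a => ?_⟩
  have hle := norm_integral_le_of_norm_le_const (μ := κ a) (.of_forall hC)
  rwa [probReal_univ, mul_one] at hle

lemma isMarkovKernel_pow (κ : Kernel α α) [IsMarkovKernel κ] (n : ℕ) : IsMarkovKernel (κ ^ n) := by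
  induction n with
  | zero => exact inferInstanceAs (IsMarkovKernel Kernel.id)
  | succ n ih => rw [Kernel.pow_add, pow_one]; infer_instance

lemma markovOp_pow_zero (κ : Kernel α α) {f : α → ℝ} (hf : IsBoundedMeasurable f) :
    markovOp (κ ^ 0) f = f := by
  funext a
  exact integral_dirac' f a hf.measurable.stronglyMeasurable

lemma markovOp_pow_add (κ : Kernel α α) [IsMarkovKernel κ] {f : α → ℝ}
    (hf : IsBoundedMeasurable f) (m n : ℕ) :
    markovOp (κ ^ (m + n)) f = markovOp (κ ^ n) (markovOp (κ ^ m) f) := by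
  have := isMarkovKernel_pow κ
  funext a
  rw [markovOp, Kernel.pow_add]
  exact Kernel.integral_comp (hf.integrable _)

lemma markovOp_pow_succ (κ : Kernel α α) [IsMarkovKernel κ] {f : α → ℝ}
    (hf : IsBoundedMeasurable f) (n : ℕ) :
    markovOp (κ ^ (n + 1)) f = markovOp κ (markovOp (κ ^ n) f) := by
  rw [markovOp_pow_add κ hf, pow_one]

lemma ae_pow_mem (κ : Kernel α α) {s : Set α} (hs : MeasurableSet s)
    (hκ : ∀ a ∈ s, ∀ᵐ b ∂κ a, b ∈ s) (n : ℕ) {a : α} (ha : a ∈ s) : ∀ᵐ b ∂(κ ^ n) a, b ∈ s := by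
  induction n generalizing a with
  | zero => exact (ae_dirac_iff hs).2 ha
  | succ n ih =>
    rw [Kernel.pow_add, pow_one]
    refine Kernel.ae_comp_of_ae_ae hs ?_
    filter_upwards [hκ a ha] with b hb using ih hb

end MarkovOperator

section History

/-- A state history together with a noise past, the phase space of the extended chain. Both are
encoded by `x n = x_{-n}`, so that index `0` is the most recent entry. -/
abbrev History (H E : Type*) := (ℕ → H) × (ℕ → E)

/-- The histories whose states lie in `X` and whose noise past is in `𝓔`. -/
def admissible {H E : Type*} (X : Set H) (𝓔 : Set (ℕ → E)) : Set (History H E) :=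
  {w | (∀ i, w.1 i ∈ X) ∧ w.2 ∈ 𝓔}

/-- One step of the extended chain when the new noise value is `y`. -/
def step {H E : Type*} (S : H × E → H) (w : History H E) (y : E) : History H E :=
  (seqAppend w.1 (S (w.1 0, y)), seqAppend w.2 y)

/-- A function of the history depends on the states of index at most `r` and on the noise. -/
def DependsOnRecent {H E : Type*} (r : ℕ) (f : History H E → ℝ) : Prop :=
  ∀ ξ, DependsOn (fun x => f (x, ξ)) (Iic r)

lemma DependsOnRecent.step {H E : Type*} {r : ℕ} {f : History H E → ℝ} (hf : DependsOnRecent r f)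
    (S : H × E → H) (y : E) : DependsOnRecent (r - 1) fun w => f (step S w y) := by
  intro ξ x x' hxx'
  refine hf _ fun i hi => ?_
  cases i with
  | zero => simp only [seqAppend, hxx' 0 (Nat.zero_le _)]
  | succ i => exact hxx' i (Nat.le_sub_one_of_lt hi)

variable {H E : Type*} [MeasurableSpace H] [MeasurableSpace E] {S : H × E → H}

lemma measurable_step (hS : Measurable S) : Measurable fun p : History H E × E =>
    step S p.1 p.2 := by
  have hstate : Measurable fun p : History H E × E => S (p.1.1 0, p.2) := by fun_prop
  exact (measurable_seqAppend.comp (measurable_fst.fst.prodMk hstate)).prodMk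
    (measurable_seqAppend.comp (measurable_fst.snd.prodMk measurable_snd))

lemma measurable_step_right (hS : Measurable S) (w : History H E) : Measurable (step S w) :=
  (measurable_step hS).comp measurable_prodMk_left

lemma measurableSet_admissible {X : Set H} (hX : MeasurableSet X) {𝓔 : Set (ℕ → E)}
    (h𝓔 : MeasurableSet 𝓔) : MeasurableSet (admissible X 𝓔) := by
  have hpi : MeasurableSet {x : ℕ → H | ∀ i, x i ∈ X} := by
    rw [ofPred_forall]
    exact .iInter fun i => measurable_pi_apply i hX
  exact (measurable_fst hpi).inter (measurable_snd h𝓔)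

/-- The transition kernel of the extended chain: draw the new noise value from the conditional law
`κ` given the noise past, then perform one step. -/
noncomputable def historyKernel (S : H × E → H) (κ : Kernel (ℕ → E) E) :
    Kernel (History H E) (History H E) :=
  (Kernel.id ×ₖ (κ.comap Prod.snd measurable_snd)).map fun p => step S p.1 p.2

variable {κ : Kernel (ℕ → E) E} [IsMarkovKernel κ]

lemma isMarkovKernel_historyKernel (hS : Measurable S) (κ : Kernel (ℕ → E) E) [IsMarkovKernel κ] :
    IsMarkovKernel (historyKernel S κ) :=
  Kernel.IsMarkovKernel.map _ (measurable_step hS)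

lemma historyKernel_apply (hS : Measurable S) (w : History H E) :
    historyKernel S κ w = (κ w.2).map (step S w) := by
  rw [historyKernel, Kernel.map_apply _ (measurable_step hS), Kernel.prod_apply, Kernel.id_apply,
    Kernel.comap_apply, Measure.dirac_prod,
    Measure.map_map (measurable_step hS) measurable_prodMk_left]
  rfl

lemma markovOp_historyKernel (hS : Measurable S) {f : History H E → ℝ}
    (hf : IsBoundedMeasurable f) (w : History H E) :
    markovOp (historyKernel S κ) f w = ∫ y, f (step S w y) ∂κ w.2 := by
  rw [markovOp, historyKernel_apply hS,
    integral_map (measurable_step_right hS w).aemeasurable hf.measurable.aestronglyMeasurable]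

lemma DependsOnRecent.markovOp (hS : Measurable S) {f : History H E → ℝ}
    (hf : IsBoundedMeasurable f) {r : ℕ} (hr : DependsOnRecent r f) :
    DependsOnRecent (r - 1) (markovOp (historyKernel S κ) f) := by
  intro ξ x x' hxx'
  simp only [markovOp_historyKernel hS hf]
  exact integral_congr_ae (.of_forall fun y => hr.step S y ξ hxx')

lemma DependsOnRecent.markovOp_pow (hS : Measurable S) {f : History H E → ℝ}
    (hf : IsBoundedMeasurable f) {r : ℕ} (hr : DependsOnRecent r f) (n : ℕ) :
    DependsOnRecent (r - n) (_root_.markovOp (historyKernel S κ ^ n) f) := by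
  have := isMarkovKernel_historyKernel hS κ
  have := isMarkovKernel_pow (historyKernel S κ)
  induction n with
  | zero => rwa [markovOp_pow_zero _ hf]
  | succ n ih =>
    rw [markovOp_pow_succ _ hf, ← Nat.sub_sub]
    exact ih.markovOp hS (hf.markovOp _)

end History

section DrivenSystem

/-- The system `u_k = S (u_{k-1}, η_k)` on the invariant closed set `X`, driven by a noise
satisfying `LipschitzNoise`. -/
structure DrivenSystem {H E : Type*} [TopologicalSpace H] [MeasurableSpace H]
    [NormedAddCommGroup E] [MeasureSpace E] (X : Set H) (K : Set E) (S : H × E → H)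
    (𝓔 : Set (ℕ → E)) (ι L : ℝ) (ρ : (ℕ → E) → E → ℝ) (κ : Kernel (ℕ → E) E) : Prop
    extends LipschitzNoise K 𝓔 ι L ρ κ where
  isClosed_states : IsClosed X
  measurable : Measurable S
  map_mem : ∀ u ∈ X, ∀ y ∈ K, S (u, y) ∈ X

/-- Bounded measurable functions whose oscillation over admissible histories is at most `a`, and
which, the state history being fixed, are `b`-Lipschitz in the noise past. -/
structure OscLipBound {H E : Type*} [MeasurableSpace H] [NormedAddCommGroup E] [MeasurableSpace E]
    (X : Set H) (𝓔 : Set (ℕ → E)) (ι a b : ℝ) (f : History H E → ℝ) : Prop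
    extends IsBoundedMeasurable f where
  sub_le : ∀ w ∈ admissible X 𝓔, ∀ w' ∈ admissible X 𝓔, f w - f w' ≤ a
  sub_le_dPast : ∀ x ξ ξ', (x, ξ) ∈ admissible X 𝓔 → (x, ξ') ∈ admissible X 𝓔 →
    f (x, ξ) - f (x, ξ') ≤ b * dPast ι ξ ξ'

lemma OscLipBound.nonneg {H E : Type*} [MeasurableSpace H] [NormedAddCommGroup E]
    [MeasurableSpace E] {X : Set H} {𝓔 : Set (ℕ → E)} {ι a b : ℝ} {f : History H E → ℝ}
    (hf : OscLipBound X 𝓔 ι a b f) {w : History H E} (hw : w ∈ admissible X 𝓔) : 0 ≤ a :=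
  (sub_self (f w)).symm.trans_le (hf.sub_le w hw w hw)

lemma OscLipBound.mono {H E : Type*} [MeasurableSpace H] [NormedAddCommGroup E] [MeasurableSpace E]
    {X : Set H} {𝓔 : Set (ℕ → E)} {ι a a' b b' : ℝ} {f : History H E → ℝ}
    (hf : OscLipBound X 𝓔 ι a b f) (hι : 0 ≤ ι) (ha : a ≤ a') (hb : b ≤ b') :
    OscLipBound X 𝓔 ι a' b' f where
  toIsBoundedMeasurable := hf.toIsBoundedMeasurable
  sub_le w hw w' hw' := (hf.sub_le w hw w' hw').trans ha
  sub_le_dPast x ξ ξ' hw hw' := (hf.sub_le_dPast x ξ ξ' hw hw').trans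
    (mul_le_mul_of_nonneg_right hb (dPast_nonneg hι ξ ξ'))

/-- The weight of the Lipschitz seminorm relative to the oscillation. It is chosen so that the
contribution `a * (L * volume.real K)` of the oscillation `a` to the Lipschitz constant of the
image of a function is half of what the shift of the past gains. -/
noncomputable def pastWeight {E : Type*} [MeasureSpace E] (K : Set E) (ι L : ℝ) : ℝ :=
  2 * (L * volume.real K) / (1 - ι⁻¹)

namespace DrivenSystem

variable {H E : Type*} [TopologicalSpace H] [MeasurableSpace H] [NormedAddCommGroup E]
  [MeasureSpace E] {X : Set H} {K : Set E} {S : H × E → H} {𝓔 : Set (ℕ → E)} {ι L : ℝ}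
  {ρ : (ℕ → E) → E → ℝ} {κ : Kernel (ℕ → E) E}

lemma pastWeight_nonneg (D : DrivenSystem X K S 𝓔 ι L ρ κ) : 0 ≤ pastWeight K ι L :=
  div_nonneg (mul_nonneg zero_le_two (mul_nonneg D.lipschitz_nonneg measureReal_nonneg))
    (sub_nonneg.2 D.inv_lt_one.le)

lemma mul_volume_eq (D : DrivenSystem X K S 𝓔 ι L ρ κ) :
    L * volume.real K = (1 - ι⁻¹) / 2 * pastWeight K ι L := by
  rw [pastWeight]
  field_simp [(sub_pos.2 D.inv_lt_one).ne']

lemma ae_step_mem (D : DrivenSystem X K S 𝓔 ι L ρ κ) {w : History H E}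
    (hw : w ∈ admissible X 𝓔) : ∀ᵐ y ∂κ w.2, step S w y ∈ admissible X 𝓔 := by
  filter_upwards [D.seqAppend_mem _ hw.2] with y hy
  refine ⟨fun i => ?_, hy⟩
  cases i with
  | zero => exact D.map_mem _ (hw.1 0) _ (D.mem _ hy 0)
  | succ i => exact hw.1 i

lemma step_sub_step_le (D : DrivenSystem X K S 𝓔 ι L ρ κ) {a b : ℝ} {f : History H E → ℝ}
    (hf : OscLipBound X 𝓔 ι a b f) (hf0 : DependsOnRecent 0 f) {w w' : History H E}
    (hw : w ∈ admissible X 𝓔) (hw' : w' ∈ admissible X 𝓔) {y y' : E}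
    (hy : step S w y ∈ admissible X 𝓔) (hy' : step S w' y' ∈ admissible X 𝓔)
    (heq : S (w.1 0, y) = S (w'.1 0, y')) :
    f (step S w y) - f (step S w' y') ≤ b * (‖y - y'‖ + ι⁻¹ * dPast ι w.2 w'.2) := by
  have hstate : f (step S w y) = f ((step S w' y').1, seqAppend w.2 y) :=
    hf0 _ fun i hi => by
      obtain rfl : i = 0 := Nat.le_zero.1 hi
      exact heq
  rw [hstate, ← D.dPast_seqAppend hw.2 hw'.2]
  exact hf.sub_le_dPast _ _ _ ⟨hy'.1, hy.2⟩ hy'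

lemma measurableSet_admissible [OpensMeasurableSpace H] [BorelSpace E]
    [SecondCountableTopology E] (D : DrivenSystem X K S 𝓔 ι L ρ κ) :
    MeasurableSet (admissible X 𝓔) :=
  _root_.measurableSet_admissible D.isClosed_states.measurableSet D.isClosed.measurableSet

variable [IsMarkovKernel κ]

lemma markovOp_sub_le (D : DrivenSystem X K S 𝓔 ι L ρ κ) {a b : ℝ} {f : History H E → ℝ}
    (hf : OscLipBound X 𝓔 ι a b f) {w w' : History H E} (hw : w ∈ admissible X 𝓔)
    (hw' : w' ∈ admissible X 𝓔) :
    markovOp (historyKernel S κ) f w - markovOp (historyKernel S κ) f w' ≤ a := by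
  have hstep := measurable_step_right D.measurable
  rw [markovOp_historyKernel D.measurable hf.toIsBoundedMeasurable,
    markovOp_historyKernel D.measurable hf.toIsBoundedMeasurable]
  have hle := integral_sub_integral_le_of_common_part (Q := κ w.2) (Q' := κ w'.2)
    (ν := (0 : Measure E)) (g := id) (g' := id) (t := 0) (by fun_prop) (by fun_prop)
    (by simpa using Measure.zero_le _) (by simpa using Measure.zero_le _)
    ((hf.comp (hstep w)).integrable _) ((hf.comp (hstep w')).integrable _) (D.ae_step_mem hw)
    (D.ae_step_mem hw') (fun y hy y' hy' => hf.sub_le _ hy _ hy') (by simp)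
  simpa using hle

variable [BorelSpace E]

section Lipschitz

variable [IsFiniteMeasureOnCompacts (volume : Measure E)]

lemma oscLipBound_markovOp (D : DrivenSystem X K S 𝓔 ι L ρ κ) {a b : ℝ} (hb : 0 ≤ b)
    {f : History H E → ℝ} (hf : OscLipBound X 𝓔 ι a b f) :
    OscLipBound X 𝓔 ι a (ι⁻¹ * b + a * (L * volume.real K)) (markovOp (historyKernel S κ) f) := by
  have := isMarkovKernel_historyKernel D.measurable κ
  refine ⟨hf.markovOp _, fun w hw w' hw' => D.markovOp_sub_le hf hw hw', fun x ξ ξ' hw hw' => ?_⟩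
  have ha := hf.nonneg hw
  have hstep := measurable_step_right D.measurable
  rw [markovOp_historyKernel D.measurable hf.toIsBoundedMeasurable,
    markovOp_historyKernel D.measurable hf.toIsBoundedMeasurable]
  calc _ ≤ b * (ι⁻¹ * dPast ι ξ ξ') + a * (L * volume.real K * dPast ι ξ ξ') :=
        D.integral_sub_integral_le hw.2 hw'.2 ((hf.comp (hstep _)).integrable _)
          ((hf.comp (hstep _)).integrable _) (D.ae_step_mem hw) (D.ae_step_mem hw') ha
          (mul_nonneg hb (mul_nonneg D.inv_pos.le (D.dPast_nonneg ξ ξ')))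
          (fun y hy y' hy' => hf.sub_le _ hy _ hy') fun y hy => by
            rw [← zero_add (ι⁻¹ * dPast ι ξ ξ'), ← norm_zero (E := E), ← sub_self y,
              ← D.dPast_seqAppend hw.2 hw'.2]
            exact hf.sub_le_dPast _ _ _ hy.1 hy.2
    _ = _ := by ring

lemma oscLipBound_markovOp_pastWeight (D : DrivenSystem X K S 𝓔 ι L ρ κ) {a : ℝ} (ha : 0 ≤ a)
    {f : History H E → ℝ} (hf : OscLipBound X 𝓔 ι a (a * pastWeight K ι L) f) :
    OscLipBound X 𝓔 ι a ((1 + ι⁻¹) / 2 * (a * pastWeight K ι L))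
      (markovOp (historyKernel S κ) f) := by
  convert D.oscLipBound_markovOp (mul_nonneg ha D.pastWeight_nonneg) hf using 1
  rw [D.mul_volume_eq]
  ring

lemma oscLipBound_markovOp_pow (D : DrivenSystem X K S 𝓔 ι L ρ κ) {a : ℝ} (ha : 0 ≤ a)
    {f : History H E → ℝ} (hf : OscLipBound X 𝓔 ι a (a * pastWeight K ι L) f) (n : ℕ) :
    OscLipBound X 𝓔 ι a (a * pastWeight K ι L) (markovOp (historyKernel S κ ^ n) f) := by
  have := isMarkovKernel_historyKernel D.measurable κ
  induction n with
  | zero => rwa [markovOp_pow_zero _ hf.toIsBoundedMeasurable]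
  | succ n ih =>
    rw [markovOp_pow_succ _ hf.toIsBoundedMeasurable]
    exact (D.oscLipBound_markovOp_pastWeight ha ih).mono (inv_nonneg.1 D.inv_pos.le) le_rfl
      (mul_le_of_le_one_left (mul_nonneg ha D.pastWeight_nonneg) (by linarith [D.inv_lt_one]))

end Lipschitz

variable [OpensMeasurableSpace H] [SecondCountableTopology E]

lemma ae_pow_mem_admissible (D : DrivenSystem X K S 𝓔 ι L ρ κ) (n : ℕ) {w : History H E}
    (hw : w ∈ admissible X 𝓔) : ∀ᵐ w' ∂(historyKernel S κ ^ n) w, w' ∈ admissible X 𝓔 := by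
  refine ae_pow_mem _ D.measurableSet_admissible (fun w hw => ?_) n hw
  rw [historyKernel_apply D.measurable]
  exact (ae_map_iff (measurable_step_right D.measurable w).aemeasurable
    D.measurableSet_admissible).2 (D.ae_step_mem hw)

end DrivenSystem

end DrivenSystem

section LocalCoupling

variable {H E : Type*} [NormedAddCommGroup H] [NormedSpace ℝ H] [FiniteDimensional ℝ H]
  [NormedAddCommGroup E] [NormedSpace ℝ E] [FiniteDimensional ℝ E] [MeasureSpace E] [BorelSpace E]
  [(volume : Measure E).IsAddHaarMeasure] {X : Set H}
  {K : Set E} {S : H × E → H}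
  {S' : E → H × E →L[ℝ] H} {𝓔 : Set (ℕ → E)} {ι L : ℝ} {ρ : (ℕ → E) → E → ℝ}
  {κ : Kernel (ℕ → E) E} [IsMarkovKernel κ] {u₀ : H} {ξ₀ : ℕ → E}

lemma LipschitzNoise.exists_common_image (N : LipschitzNoise K 𝓔 ι L ρ κ) (hξ₀ : ξ₀ ∈ 𝓔)
    (hS : ∀ y ∈ K, HasStrictFDerivAt S (S' y) (u₀, y))
    (hsurj : ∀ y ∈ K, Function.Surjective ((S' y).comp (ContinuousLinearMap.inr ℝ H E)))
    {r : ℝ} (hr : 0 < r) :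
    ∃ (ν : Measure E) (A : E → H) (g : H → E → E) (y₀ : E), IsFiniteMeasure ν ∧ ν ≠ 0 ∧
      ∃ τ > 0, ∀ᶠ v in nhds u₀, ∀ ξ ∈ 𝓔, dPast ι ξ ξ₀ < τ →
        AEMeasurable (g v) ν ∧ (∀ᵐ b ∂ν, S (v, g v b) = A b ∧ g v b ∈ ball y₀ r) ∧
          ν.map (g v) ≤ κ ξ := by
  obtain ⟨y₀, hy₀, c, hc, τ, hτ, hle⟩ := N.exists_smul_restrict_le hξ₀
  obtain ⟨ν, A, g, hν, hν0, hg⟩ := exists_common_image_of_hasStrictFDerivAt volume (hS y₀ hy₀)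
    (hsurj y₀ hy₀) (ball_mem_nhds y₀ (lt_min hτ hr))
  have hc0 : ENNReal.ofReal c ≠ 0 := (ENNReal.ofReal_pos.2 hc).ne'
  refine ⟨ENNReal.ofReal c • ν, A, g, y₀, Measure.smul_finite ν ENNReal.ofReal_ne_top, ?_, τ, hτ,
    ?_⟩
  · rw [← Measure.measure_univ_ne_zero] at hν0 ⊢
    exact mul_ne_zero hc0 hν0
  filter_upwards [hg] with v ⟨hmeas, hA, hmap⟩ ξ hξ hd
  have hball : ∀ᵐ b ∂ν, g v b ∈ ball y₀ (min τ r) :=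
    ae_of_ae_map hmeas (hmap.absolutelyContinuous.ae_le (ae_restrict_mem measurableSet_ball))
  refine ⟨hmeas.smul_measure _, Measure.ae_smul_measure ?_ _, ?_⟩
  · filter_upwards [hA, hball] with b hb hbr using ⟨hb, ball_subset_ball (min_le_right _ _) hbr⟩
  · rw [Measure.map_smul]
    refine le_trans ?_ (hle ξ hξ hd)
    gcongr
    exact hmap.trans (Measure.restrict_mono (ball_subset_ball (min_le_left _ _)) le_rfl)

variable [MeasurableSpace H]

lemma DrivenSystem.exists_markovOp_sub_le_of_near (D : DrivenSystem X K S 𝓔 ι L ρ κ)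
    (hξ₀ : ξ₀ ∈ 𝓔) (hS : ∀ y ∈ K, HasStrictFDerivAt S (S' y) (u₀, y))
    (hsurj : ∀ y ∈ K, Function.Surjective ((S' y).comp (ContinuousLinearMap.inr ℝ H E)))
    {M : ℝ} (hM : 0 ≤ M) :
    ∃ ε > 0, ∃ τ > 0, ∃ c > 0, ∀ a f, OscLipBound X 𝓔 ι a (a * M) f → DependsOnRecent 0 f →
      ∀ w ∈ admissible X 𝓔 ∩ {w | dist (w.1 0) u₀ < ε ∧ dPast ι w.2 ξ₀ < τ},
      ∀ w' ∈ admissible X 𝓔 ∩ {w | dist (w.1 0) u₀ < ε ∧ dPast ι w.2 ξ₀ < τ},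
        markovOp (historyKernel S κ) f w - markovOp (historyKernel S κ) f w' ≤ (1 - c) * a := by
  set r := 1 / (8 * (M + 1))
  have hr : 0 < r := by positivity
  have hMr : M * (2 * r + 2 * r) ≤ 1 / 2 := by
    have hdef : r * (8 * (M + 1)) = 1 := div_mul_cancel₀ _ (by positivity)
    linarith
  obtain ⟨ν, A, g, y₀, hν, hν0, τ, hτ, hg⟩ := D.exists_common_image hξ₀ hS hsurj hr
  obtain ⟨ε, hε, hgε⟩ := Metric.eventually_nhds_iff.1 hg
  have : NeZero ν := ⟨hν0⟩
  have hmass : 0 < ν.real univ := measureReal_univ_pos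
  refine ⟨ε, hε, min τ r, lt_min hτ hr, ν.real univ / 2, by positivity, ?_⟩
  rintro a f hf hf0 w ⟨hw, hwε, hwτ⟩ w' ⟨hw', hwε', hwτ'⟩
  obtain ⟨hm, hA, hle⟩ := hgε hwε w.2 hw.2 (hwτ.trans_le (min_le_left _ _))
  obtain ⟨hm', hA', hle'⟩ := hgε hwε' w'.2 hw'.2 (hwτ'.trans_le (min_le_left _ _))
  have ha := hf.nonneg hw
  have hstep := measurable_step_right D.measurable
  have hpast : ι⁻¹ * dPast ι w.2 w'.2 ≤ 2 * r := by
    have htri := D.dPast_triangle hw.2 hξ₀ hw'.2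
    rw [dPast_comm ι ξ₀] at htri
    have hle_one := mul_le_of_le_one_left (D.dPast_nonneg w.2 w'.2) D.inv_lt_one.le
    linarith [min_le_right τ r]
  have hcommon : ∀ᵐ b ∂ν, f (step S w (g (w.1 0) b)) - f (step S w' (g (w'.1 0) b)) ≤ a / 2 := by
    filter_upwards [hA, hA', ae_of_ae_map hm (hle.absolutelyContinuous.ae_le (D.ae_step_mem hw)),
      ae_of_ae_map hm' (hle'.absolutelyContinuous.ae_le (D.ae_step_mem hw'))]
      with b ⟨hb, hbr⟩ ⟨hb', hbr'⟩ hbw hbw'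
    calc _ ≤ a * M * (‖g (w.1 0) b - g (w'.1 0) b‖ + ι⁻¹ * dPast ι w.2 w'.2) :=
          D.step_sub_step_le hf hf0 hw hw' hbw hbw' (hb.trans hb'.symm)
      _ ≤ a * M * (2 * r + 2 * r) := by
          gcongr
          rw [← dist_eq_norm]
          linarith [dist_triangle_right (g (w.1 0) b) (g (w'.1 0) b) y₀, mem_ball.1 hbr,
            mem_ball.1 hbr']
      _ = a * (M * (2 * r + 2 * r)) := mul_assoc _ _ _
      _ ≤ a * (1 / 2) := by gcongr
      _ = a / 2 := by ring
  rw [markovOp_historyKernel D.measurable hf.toIsBoundedMeasurable,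
    markovOp_historyKernel D.measurable hf.toIsBoundedMeasurable]
  have hfinal := integral_sub_integral_le_of_common_part hm hm' hle hle'
    ((hf.comp (hstep w)).integrable _) ((hf.comp (hstep w')).integrable _) (D.ae_step_mem hw)
    (D.ae_step_mem hw') (fun y hy y' hy' => hf.sub_le _ hy _ hy') hcommon
  linarith

end LocalCoupling

section Recurrence

/-- The extended chain after the successive noise values `g 0, …, g (k - 1)`. -/
def steps {H E : Type*} (S : H × E → H) : (k : ℕ) → History H E → (Fin k → E) → History H E
  | 0, w, _ => w
  | k + 1, w, g => steps S k (step S w (g 0)) (Fin.tail g)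

/-- The histories following the dynamics `S` during the last `n` steps, with noise values of norm
less than `δ`. -/
def quietHistories {H E : Type*} [Norm E] (S : H × E → H) (n : ℕ) (δ : ℝ) : Set (History H E) :=
  {w | ∀ i < n, w.1 i = S (w.1 (i + 1), w.2 i) ∧ ‖w.2 i‖ < δ}

/-- Recurrence to zero of the conditional laws `Q`: for all `n` and `δ` there is a time `s` after
which the next `n` values have norm less than `δ`, with a probability bounded below uniformly over
the pasts in `𝓔`. -/
def RecurrentToZero {E : Type*} [Norm E] [MeasurableSpace E] (Q : (ℕ → E) → Measure E)
    (𝓔 : Set (ℕ → E)) : Prop :=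
  ∀ n : ℕ, 1 ≤ n → ∀ δ > 0, ∃ s : ℕ, 1 ≤ s ∧ ∃ c > 0, ∀ ξ ∈ 𝓔,
    ENNReal.ofReal c ≤ ((Qchain Q (s + n) ξ).map fun f => f ∘ Fin.natAdd s)
      {g : Fin n → E | ∀ i, ‖g i‖ < δ}

section Steps

variable {H E : Type*} {S : H × E → H}

lemma steps_snd_add (k : ℕ) (w : History H E) (g : Fin k → E) (j : ℕ) :
    (steps S k w g).2 (j + k) = w.2 j := by
  induction k generalizing w j with
  | zero => rfl
  | succ k ih =>
    have htail := ih (step S w (g 0)) (Fin.tail g) (j + 1)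
    rw [add_right_comm] at htail
    exact htail

lemma steps_snd_rev (k : ℕ) (w : History H E) (g : Fin k → E) (j : Fin k) :
    (steps S k w g).2 j.rev = g j := by
  induction k generalizing w with
  | zero => exact j.elim0
  | succ k ih =>
    cases j using Fin.cases with
    | zero => simpa [steps, step, seqAppend] using steps_snd_add k (step S w (g 0)) (Fin.tail g) 0
    | succ j => simpa [steps, Fin.rev_succ, Fin.tail] using ih (step S w (g 0)) (Fin.tail g) j

lemma steps_fst_eq (k : ℕ) (w : History H E) (g : Fin k → E) {n : ℕ}
    (hw : ∀ i < n, w.1 i = S (w.1 (i + 1), w.2 i)) :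
    ∀ i < n + k, (steps S k w g).1 i = S ((steps S k w g).1 (i + 1), (steps S k w g).2 i) := by
  induction k generalizing w n with
  | zero => exact hw
  | succ k ih =>
    refine fun i hi => ih (step S w (g 0)) (Fin.tail g) (n := n + 1) (fun i hi => ?_) i (by omega)
    cases i with
    | zero => rfl
    | succ i => exact hw i (Nat.lt_of_succ_lt_succ hi)

lemma steps_mem_quietHistories [Norm E] {s n : ℕ} {δ : ℝ} (w : History H E) (g : Fin (s + n) → E)
    (hg : ∀ i, ‖g (Fin.natAdd s i)‖ < δ) : steps S (s + n) w g ∈ quietHistories S n δ := by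
  refine fun i hi => ⟨steps_fst_eq _ w g (n := 0) (by simp) i (by omega), ?_⟩
  have hnoise := steps_snd_rev (S := S) _ w g (Fin.natAdd s (Fin.rev ⟨i, hi⟩))
  rw [Fin.val_rev, Fin.val_natAdd, Fin.val_rev,
    show s + n - (s + (n - (i + 1)) + 1) = i by omega] at hnoise
  exact hnoise ▸ hg _

variable [MeasurableSpace H] [MeasurableSpace E]

lemma measurable_steps (hS : Measurable S) (k : ℕ) :
    Measurable fun p : History H E × (Fin k → E) => steps S k p.1 p.2 := by
  induction k with
  | zero => exact measurable_fst
  | succ k ih =>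
    have hstep : Measurable fun p : History H E × (Fin (k + 1) → E) => step S p.1 (p.2 0) :=
      (measurable_step hS).comp (f := fun p : History H E × (Fin (k + 1) → E) => (p.1, p.2 0))
        (by fun_prop)
    exact ih.comp (hstep.prodMk (g := fun p => Fin.tail p.2) (by unfold Fin.tail; fun_prop))

lemma historyKernel_pow_succ_apply (hS : Measurable S) (κ : Kernel (ℕ → E) E)
    [IsMarkovKernel κ] (n : ℕ) (w : History H E) {A : Set (History H E)} (hA : MeasurableSet A) :
    (historyKernel S κ ^ (n + 1)) w A = ∫⁻ y, (historyKernel S κ ^ n) (step S w y) A ∂κ w.2 := by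
  rw [Kernel.pow_add, pow_one]
  change ((historyKernel S κ ^ n) ∘ₖ historyKernel S κ) w A = _
  rw [Kernel.comp_apply' _ _ _ hA, historyKernel_apply hS,
    lintegral_map (Kernel.measurable_coe _ hA) (measurable_step_right hS w)]

end Steps

lemma measurable_fin_cons {E : Type*} [MeasurableSpace E] {k : ℕ} (y : E) :
    Measurable fun g : Fin k → E => (Fin.cons y g : Fin (k + 1) → E) :=
  measurable_pi_lambda _ fun i => by
    cases i using Fin.cases <;> simp only [Fin.cons_zero, Fin.cons_succ] <;> fun_prop

lemma measurableSet_quietHistories {H E : Type*} [MeasurableSpace H] [MeasurableEq H]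
    [NormedAddCommGroup E] [MeasurableSpace E] [OpensMeasurableSpace E] {S : H × E → H}
    (hS : Measurable S) (n : ℕ) (δ : ℝ) : MeasurableSet (quietHistories S n δ) := by
  simp only [quietHistories, ofPred_forall]
  refine .iInter fun i => .iInter fun _ => .inter ?_ ?_
  · have hcur : Measurable fun w : History H E => w.1 i := by fun_prop
    have hnext : Measurable fun w : History H E => S (w.1 (i + 1), w.2 i) := by fun_prop
    exact measurableSet_eq_fun hcur hnext
  · have hnorm : Measurable fun w : History H E => ‖w.2 i‖ := by fun_prop
    exact measurableSet_lt hnorm measurable_const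

section ZeroNoise

variable {H E : Type*} [Zero E] {X : Set H} {K : Set E} {S : H × E → H} {u : H}

lemma traj_zero_mem (h0 : (0 : E) ∈ K) (hmap : ∀ u ∈ X, ∀ y ∈ K, S (u, y) ∈ X) (hu : u ∈ X)
    (n : ℕ) : traj S u (fun _ => 0) n ∈ X := by
  induction n with
  | zero => exact hu
  | succ n ih => exact hmap _ ih _ h0

lemma traj_zero_add (m n : ℕ) :
    traj S u (fun _ => (0 : E)) (m + n) = traj S (traj S u (fun _ => 0) m) (fun _ => 0) n := by
  induction n with
  | zero => rfl
  | succ n ih => rw [← add_assoc, traj, ih, traj]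

end ZeroNoise

lemma exists_dist_traj_zero_lt {H E : Type*} [PseudoMetricSpace H] [NormedAddCommGroup E]
    {X : Set H} {K : Set E} {S : H × E → H} (hX : IsCompact X) (hK : IsCompact K)
    (hS : Continuous S) (h0 : (0 : E) ∈ K) (hmap : ∀ u ∈ X, ∀ y ∈ K, S (u, y) ∈ X) (n : ℕ) {ε : ℝ}
    (hε : 0 < ε) :
    ∃ δ > 0, ∀ x ξ, (∀ i, x i ∈ X) → (∀ i, ξ i ∈ K) → (x, ξ) ∈ quietHistories S n δ →
      dist (x 0) (traj S (x n) (fun _ => 0) n) < ε := by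
  induction n generalizing ε with
  | zero => exact ⟨1, one_pos, fun x ξ _ _ _ => by simpa [traj] using hε⟩
  | succ n ih =>
    obtain ⟨δ₁, hδ₁, hSδ⟩ := uniformContinuousOn_iff.1
      ((hX.prod hK).uniformContinuousOn_of_continuous hS.continuousOn) ε hε
    obtain ⟨δ₂, hδ₂, htail⟩ := ih hδ₁
    refine ⟨min δ₁ δ₂, lt_min hδ₁ hδ₂, fun x ξ hx hξ hq => ?_⟩
    obtain ⟨hx0, hξ0⟩ := hq 0 n.succ_pos
    have hprev := htail (fun i => x (i + 1)) (fun i => ξ (i + 1)) (fun i => hx _) (fun i => hξ _)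
      fun i hi => ⟨(hq _ (Nat.succ_lt_succ hi)).1,
        (hq _ (Nat.succ_lt_succ hi)).2.trans_le (min_le_right _ _)⟩
    change dist (x 0) (S (traj S (x (n + 1)) (fun _ => 0) n, 0)) < ε
    rw [show x 0 = S (x 1, ξ 0) from hx0]
    refine hSδ _ ⟨hx _, hξ _⟩ _ ⟨traj_zero_mem h0 hmap (hx _) n, h0⟩ ?_
    rw [Prod.dist_eq, dist_zero_right]
    exact max_lt hprev (hξ0.trans_le (min_le_left _ _))

lemma exists_quietHistories_near_zero {H E : Type*} [NormedAddCommGroup H] [NormedAddCommGroup E]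
    {X : Set H} {K : Set E} {S : H × E → H} (hX : IsCompact X) (hK : IsCompact K)
    (hS : Continuous S) (h0 : (0 : E) ∈ K) (hmap : ∀ u ∈ X, ∀ y ∈ K, S (u, y) ∈ X)
    (hdiss : ∀ ε > 0, ∃ n : ℕ, 1 ≤ n ∧ ∀ u ∈ X, ‖traj S u (fun _ => 0) n‖ ≤ ε)
    {ι : ℝ} (hι : 1 < ι) {ε τ : ℝ} (hε : 0 < ε) (hτ : 0 < τ) :
    ∃ n : ℕ, 1 ≤ n ∧ ∃ δ > 0, ∀ x ξ, (∀ i, x i ∈ X) → (∀ i, ξ i ∈ K) →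
      (x, ξ) ∈ quietHistories S n δ → dist (x 0) 0 < ε ∧ dPast ι ξ 0 < τ := by
  obtain ⟨n₁, δ₁, hδ₁, hpast⟩ := exists_forall_dPast_zero_lt hι hK.isBounded h0 hτ
  obtain ⟨n₂, hn₂, hcontr⟩ := hdiss (ε / 2) (half_pos hε)
  obtain ⟨δ₂, hδ₂, hclose⟩ := exists_dist_traj_zero_lt hX hK hS h0 hmap (n₁ + n₂) (half_pos hε)
  refine ⟨n₁ + n₂, by omega, min δ₁ δ₂, lt_min hδ₁ hδ₂, fun x ξ hx hξ hq => ⟨?_, ?_⟩⟩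
  · have htraj : ‖traj S (x (n₁ + n₂)) (fun _ => 0) (n₁ + n₂)‖ ≤ ε / 2 := by
      rw [traj_zero_add]
      exact hcontr _ (traj_zero_mem h0 hmap (hx _) n₁)
    have hdist := hclose x ξ hx hξ fun i hi =>
      ⟨(hq i hi).1, (hq i hi).2.trans_le (min_le_right _ _)⟩
    rw [← dist_zero_right] at htraj
    linarith [dist_triangle (x 0) (traj S (x (n₁ + n₂)) (fun _ => 0) (n₁ + n₂)) 0]
  · exact hpast ξ hξ fun j hj => (hq j (by omega)).2.trans_le (min_le_left _ _)

lemma zero_mem_of_recent_small {E : Type*} [NormedAddCommGroup E] {𝓔 : Set (ℕ → E)}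
    (h𝓔 : IsClosed 𝓔) (hsmall : ∀ n, ∀ δ > (0 : ℝ), ∃ ξ ∈ 𝓔, ∀ j ≤ n, ‖ξ j‖ < δ) :
    0 ∈ 𝓔 := by
  choose ξ hξ𝓔 hξ using fun n : ℕ => hsmall n (1 / ((n : ℝ) + 1)) (by positivity)
  exact h𝓔.mem_of_tendsto (tendsto_zero_of_recent_small hξ) (.of_forall hξ𝓔)

namespace DrivenSystem

variable {H E : Type*} [TopologicalSpace H] [MeasurableSpace H] [NormedAddCommGroup E]
  [MeasureSpace E] {X : Set H} {K : Set E} {S : H × E → H} {𝓔 : Set (ℕ → E)} {ι L : ℝ}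
  {ρ : (ℕ → E) → E → ℝ} {κ : Kernel (ℕ → E) E} {Q : (ℕ → E) → Measure E}
  [IsMarkovKernel κ]

lemma Qchain_steps_le (D : DrivenSystem X K S 𝓔 ι L ρ κ) (hQ : ∀ ξ ∈ 𝓔, Q ξ = κ ξ) (k : ℕ)
    {w : History H E} (hw : w ∈ admissible X 𝓔) {A : Set (History H E)} (hA : MeasurableSet A) :
    Qchain Q k w.2 {g | steps S k w g ∈ A} ≤ (historyKernel S κ ^ k) w A := by
  have hsteps : ∀ k w, MeasurableSet {g | steps S k w g ∈ A} := fun k w =>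
    ((measurable_steps D.measurable k).comp measurable_prodMk_left) hA
  induction k generalizing w with
  | zero =>
    change _ ≤ Measure.dirac w A
    rw [Qchain, Measure.dirac_apply' _ (hsteps 0 w), Measure.dirac_apply' _ hA]
    rfl
  | succ k ih =>
    rw [Qchain, historyKernel_pow_succ_apply D.measurable _ _ _ hA, hQ _ hw.2]
    refine (Measure.bind_apply_le _ (hsteps _ _)).trans (lintegral_mono_ae ?_)
    filter_upwards [D.ae_step_mem hw] with y hy
    rw [Measure.map_apply (measurable_fin_cons y) (hsteps _ _)]
    exact ih hy

variable [BorelSpace E] [MeasurableEq H]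

lemma exists_le_pow_quietHistories (D : DrivenSystem X K S 𝓔 ι L ρ κ) (hQ : ∀ ξ ∈ 𝓔, Q ξ = κ ξ)
    (hrec : RecurrentToZero Q 𝓔) {n : ℕ} (hn : 1 ≤ n) {δ : ℝ} (hδ : 0 < δ) :
    ∃ k, ∃ p > 0, ∀ w ∈ admissible X 𝓔,
      p ≤ ((historyKernel S κ ^ k) w).real (quietHistories S n δ) := by
  have := isMarkovKernel_historyKernel D.measurable κ
  have := isMarkovKernel_pow (historyKernel S κ)
  obtain ⟨s, -, c, hc, hle⟩ := hrec n hn δ hδ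
  refine ⟨s + n, c, hc, fun w hw => ?_⟩
  refine (ENNReal.ofReal_le_iff_le_toReal (measure_ne_top _ _)).1 ((hle w.2 hw.2).trans ?_)
  refine le_trans ?_ (D.Qchain_steps_le hQ _ hw (measurableSet_quietHistories D.measurable n δ))
  rw [Measure.map_apply (by unfold Function.comp; fun_prop) (by measurability)]
  exact measure_mono fun g hg => steps_mem_quietHistories w g hg

variable [OpensMeasurableSpace H] [SecondCountableTopology E]

lemma zero_mem (D : DrivenSystem X K S 𝓔 ι L ρ κ) (hQ : ∀ ξ ∈ 𝓔, Q ξ = κ ξ)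
    (hrec : RecurrentToZero Q 𝓔) (hne : (admissible X 𝓔).Nonempty) : 0 ∈ 𝓔 := by
  have := isMarkovKernel_historyKernel D.measurable κ
  refine zero_mem_of_recent_small D.isClosed fun n δ hδ => ?_
  obtain ⟨w, hw⟩ := hne
  obtain ⟨k, p, hp, hle⟩ := D.exists_le_pow_quietHistories hQ hrec n.succ_pos hδ
  have hpos : (historyKernel S κ ^ k) w (quietHistories S (n + 1) δ) ≠ 0 := fun h0 => by
    have hle_zero := hle w hw
    rw [measureReal_def, h0, ENNReal.toReal_zero] at hle_zero
    exact hle_zero.not_gt hp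
  obtain ⟨w', hq, hw'⟩ :=
    ((frequently_ae_mem_iff.2 hpos).and_eventually (D.ae_pow_mem_admissible k hw)).exists
  exact ⟨w'.2, hw'.2, fun j hj => (hq j (Nat.lt_succ_of_le hj)).2⟩

end DrivenSystem

end Recurrence

section Decay

lemma pow_div_le_inv_mul_exp {θ : ℝ} (hθ : θ ∈ Ioo 0 1) {n : ℕ} (hn : 1 ≤ n) (k : ℕ) :
    θ ^ (k / n) ≤ θ⁻¹ * Real.exp (-(-Real.log θ / n) * k) := by
  have hn0 : (0 : ℝ) < n := by exact_mod_cast hn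
  have hceil : (k : ℝ) / n ≤ (k / n : ℕ) + 1 := by
    rw [div_le_iff₀' hn0]
    exact_mod_cast (Nat.lt_mul_div_succ k hn).le
  calc θ ^ (k / n) = Real.exp (Real.log θ * (k / n : ℕ)) := by
        rw [Real.exp_mul, Real.exp_log hθ.1, Real.rpow_natCast]
    _ ≤ Real.exp (-Real.log θ + -(-Real.log θ / n) * k) :=
        Real.exp_le_exp.2 ((mul_le_mul_of_nonpos_left (sub_le_iff_le_add.2 hceil)
          (Real.log_neg hθ.1 hθ.2).le).trans_eq (by ring))
    _ = θ⁻¹ * Real.exp (-(-Real.log θ / n) * k) := by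
        rw [Real.exp_add, Real.exp_neg, Real.exp_log hθ.1]

/-- Under the iterates of the extended chain, the oscillation of the observables of the current
state and the noise past decays exponentially, with rate `γ` and constant `C`. -/
def OscDecay {H E : Type*} [MeasurableSpace H] [NormedAddCommGroup E] [MeasureSpace E]
    (X : Set H) (K : Set E) (S : H × E → H) (𝓔 : Set (ℕ → E)) (ι L : ℝ) (κ : Kernel (ℕ → E) E)
    (γ C : ℝ) : Prop :=
  ∀ a f, OscLipBound X 𝓔 ι a (a * pastWeight K ι L) f → DependsOnRecent 0 f → ∀ k : ℕ,
    ∀ w ∈ admissible X 𝓔, ∀ w' ∈ admissible X 𝓔,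
      markovOp (historyKernel S κ ^ k) f w - markovOp (historyKernel S κ ^ k) f w' ≤
        C * Real.exp (-γ * k) * a

namespace DrivenSystem

variable {H E : Type*} [NormedAddCommGroup E] [MeasureSpace E] [BorelSpace E] {X : Set H}
  {K : Set E} {S : H × E → H} {𝓔 : Set (ℕ → E)} {ι L : ℝ} {ρ : (ℕ → E) → E → ℝ}
  {κ : Kernel (ℕ → E) E} [IsMarkovKernel κ]

section Topological

variable [IsFiniteMeasureOnCompacts (volume : Measure E)] [TopologicalSpace H] [MeasurableSpace H]

lemma oscLipBound_markovOp_pow_add_one [OpensMeasurableSpace H] [SecondCountableTopology E]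
    (D : DrivenSystem X K S 𝓔 ι L ρ κ) {k : ℕ} {B : Set (History H E)} (hB : MeasurableSet B)
    {p : ℝ} (hp : 0 < p)
    (hpB : ∀ w ∈ admissible X 𝓔, p ≤ ((historyKernel S κ ^ k) w).real B) {a c : ℝ} (ha : 0 ≤ a)
    {f : History H E → ℝ} (hf : OscLipBound X 𝓔 ι a (a * pastWeight K ι L) f)
    (hc : ∀ w ∈ B ∩ admissible X 𝓔, ∀ w' ∈ B ∩ admissible X 𝓔,
      markovOp (historyKernel S κ) f w - markovOp (historyKernel S κ) f w' ≤ (1 - c) * a) :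
    OscLipBound X 𝓔 ι (max ((1 + ι⁻¹) / 2) (1 - p * c) * a)
      (max ((1 + ι⁻¹) / 2) (1 - p * c) * a * pastWeight K ι L)
      (markovOp (historyKernel S κ ^ (k + 1)) f) := by
  have := isMarkovKernel_historyKernel D.measurable κ
  have := isMarkovKernel_pow (historyKernel S κ)
  have hTf := D.oscLipBound_markovOp_pow ha hf 1
  rw [pow_one] at hTf
  refine ⟨hf.toIsBoundedMeasurable.markovOp _, fun w hw w' hw' => ?_, fun x ξ ξ' hw hw' => ?_⟩
  · rw [add_comm, markovOp_pow_add _ hf.toIsBoundedMeasurable, pow_one]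
    calc _ ≤ (1 - c) * a * p + a * (1 - p) :=
          integral_sub_integral_le_of_subsets (hTf.integrable _) (hTf.integrable _)
            (D.ae_pow_mem_admissible k hw) (D.ae_pow_mem_admissible k hw')
            (fun z hz z' hz' => hTf.sub_le z hz z' hz') hB hB hc hp (hpB w hw) (hpB w' hw')
      _ = (1 - p * c) * a := by ring
      _ ≤ _ := by gcongr; exact le_max_right _ _
  · rw [markovOp_pow_succ _ hf.toIsBoundedMeasurable]
    refine ((D.oscLipBound_markovOp_pastWeight ha (D.oscLipBound_markovOp_pow ha hf k)).sub_le_dPast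
      x ξ ξ' hw hw').trans ?_
    rw [mul_assoc (max _ _)]
    have hnonneg := D.dPast_nonneg ξ ξ'
    have hweight := D.pastWeight_nonneg
    gcongr
    exact le_max_left _ _

lemma exists_exp_decay_of_contraction (D : DrivenSystem X K S 𝓔 ι L ρ κ) {n : ℕ} (hn : 1 ≤ n)
    {θ : ℝ} (hθ : θ ∈ Ioo 0 1)
    (hcontr : ∀ a ≥ 0, ∀ f, OscLipBound X 𝓔 ι a (a * pastWeight K ι L) f → DependsOnRecent 0 f →
      OscLipBound X 𝓔 ι (θ * a) (θ * a * pastWeight K ι L) (markovOp (historyKernel S κ ^ n) f)) :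
    ∃ γ > 0, ∃ C > 0, OscDecay X K S 𝓔 ι L κ γ C := by
  have := isMarkovKernel_historyKernel D.measurable κ
  refine ⟨-Real.log θ / n, div_pos (neg_pos.2 (Real.log_neg hθ.1 hθ.2)) (by exact_mod_cast hn),
    θ⁻¹, inv_pos.2 hθ.1, fun a f hf hf0 k w hw w' hw' => ?_⟩
  have ha := hf.nonneg hw
  have hiter (q : ℕ) : OscLipBound X 𝓔 ι (θ ^ q * a) (θ ^ q * a * pastWeight K ι L)
      (markovOp (historyKernel S κ ^ (n * q)) f) := by
    induction q with
    | zero => rwa [Nat.mul_zero, markovOp_pow_zero _ hf.toIsBoundedMeasurable, pow_zero, one_mul]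
    | succ q ih =>
      rw [mul_add_one, markovOp_pow_add _ hf.toIsBoundedMeasurable, pow_succ', mul_assoc θ]
      refine hcontr _ (mul_nonneg (pow_nonneg hθ.1.le q) ha) _ ih ?_
      simpa using hf0.markovOp_pow D.measurable hf.toIsBoundedMeasurable (n * q)
  have hpow : 0 ≤ θ ^ (k / n) * a := mul_nonneg (pow_nonneg hθ.1.le _) ha
  rw [← Nat.div_add_mod k n, markovOp_pow_add _ hf.toIsBoundedMeasurable, Nat.div_add_mod]
  exact ((D.oscLipBound_markovOp_pow hpow (hiter (k / n)) (k % n)).sub_le w hw w' hw').trans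
    (mul_le_mul_of_nonneg_right (pow_div_le_inv_mul_exp hθ hn k) ha)

end Topological

variable [NormedAddCommGroup H] [NormedSpace ℝ H] [FiniteDimensional ℝ H] [MeasurableSpace H]
  [BorelSpace H] [NormedSpace ℝ E] [FiniteDimensional ℝ E]
  [(volume : Measure E).IsAddHaarMeasure] {S' : E → H × E →L[ℝ] H} {Q : (ℕ → E) → Measure E}

lemma exists_contraction (D : DrivenSystem X K S 𝓔 ι L ρ κ) (hX : IsCompact X)
    (hS : Continuous S) (hS' : ∀ y ∈ K, HasStrictFDerivAt S (S' y) (0, y))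
    (hsurj : ∀ y ∈ K, Function.Surjective ((S' y).comp (ContinuousLinearMap.inr ℝ H E)))
    (hdiss : ∀ ε > 0, ∃ n : ℕ, 1 ≤ n ∧ ∀ u ∈ X, ‖traj S u (fun _ => 0) n‖ ≤ ε)
    (hQ : ∀ ξ ∈ 𝓔, Q ξ = κ ξ) (hrec : RecurrentToZero Q 𝓔) (hne : (admissible X 𝓔).Nonempty) :
    ∃ n ≥ 1, ∃ θ ∈ Ioo (0 : ℝ) 1, ∀ a ≥ 0, ∀ f, OscLipBound X 𝓔 ι a (a * pastWeight K ι L) f →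
      DependsOnRecent 0 f →
      OscLipBound X 𝓔 ι (θ * a) (θ * a * pastWeight K ι L)
        (markovOp (historyKernel S κ ^ n) f) := by
  have hzero := D.zero_mem hQ hrec hne
  obtain ⟨ε, hε, τ, hτ, c, hc, hnear⟩ :=
    D.exists_markovOp_sub_le_of_near hzero hS' hsurj D.pastWeight_nonneg
  obtain ⟨n, hn, δ, hδ, hquiet⟩ :=
    exists_quietHistories_near_zero hX D.isCompact hS (D.mem _ hzero 0) D.map_mem hdiss D.one_lt
      hε hτ
  obtain ⟨k, p, hp, hle⟩ := D.exists_le_pow_quietHistories hQ hrec hn hδ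
  have hpc := mul_pos hp hc
  have hι := D.inv_lt_one
  have hι' := D.inv_pos
  refine ⟨k + 1, Nat.le_add_left 1 k, max ((1 + ι⁻¹) / 2) (1 - p * c),
    ⟨lt_max_of_lt_left (by linarith), max_lt (by linarith) (by linarith)⟩, fun a ha f hf hf0 =>
    D.oscLipBound_markovOp_pow_add_one (measurableSet_quietHistories D.measurable n δ) hp hle ha hf
      fun w hw w' hw' => hnear a f hf hf0 w ⟨hw.2, ?_⟩ w' ⟨hw'.2, ?_⟩⟩
  · exact hquiet w.1 w.2 hw.2.1 (D.mem _ hw.2.2) hw.1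
  · exact hquiet w'.1 w'.2 hw'.2.1 (D.mem _ hw'.2.2) hw'.1

end DrivenSystem

end Decay

section Windows

/-- The history reached after `k` steps from the constant state history `u`, the last `k` noise
values being the `k` most recent entries of the past `ξ`. -/
def historyFrom {H E : Type*} (S : H × E → H) (u : H) : ℕ → (ℕ → E) → History H E
  | 0, ξ => (fun _ => u, ξ)
  | k + 1, ξ => step S (historyFrom S u k fun n => ξ (n + 1)) (ξ 0)

/-- The `m + 1` most recent states of a history, in chronological order. -/
def recentStates {H E : Type*} (m : ℕ) (w : History H E) : Fin (m + 1) → H :=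
  fun i => w.1 (m - i)

section Algebraic

variable {H E : Type*} {S : H × E → H}

lemma historyFrom_snd (u : H) (k : ℕ) (ξ : ℕ → E) : (historyFrom S u k ξ).2 = ξ := by
  induction k generalizing ξ with
  | zero => rfl
  | succ k ih =>
    simp only [historyFrom, step, ih]
    exact seqAppend_tail ξ

lemma historyFrom_fst_mem {X : Set H} {K : Set E} (hmap : ∀ u ∈ X, ∀ y ∈ K, S (u, y) ∈ X) {u : H}
    (hu : u ∈ X) (k : ℕ) {ξ : ℕ → E} (hξ : ∀ n, ξ n ∈ K) (i : ℕ) :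
    (historyFrom S u k ξ).1 i ∈ X := by
  induction k generalizing ξ i with
  | zero => exact hu
  | succ k ih =>
    cases i with
    | zero => exact hmap _ (ih (fun n => hξ _) 0) _ (hξ 0)
    | succ i => exact ih (fun n => hξ _) i

lemma historyFrom_fst_eq_traj (u : H) (z : ℤ → E) (n : ℕ) {i : ℕ} (hi : i ≤ n) :
    (historyFrom S u n fun j : ℕ => z (n - j)).1 i = traj S u (fun j => z j) (n - i) := by
  induction n generalizing i with
  | zero =>
    obtain rfl := Nat.le_zero.1 hi
    rfl
  | succ n ih =>
    have htail : (fun j : ℕ => z ((n + 1 : ℕ) - (j + 1 : ℕ))) = fun j : ℕ => z (n - j) := by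
      funext j
      push_cast
      rw [add_sub_add_right_eq_sub]
    simp only [historyFrom, step, htail]
    cases i with
    | zero => simp only [seqAppend, ih n.zero_le, traj, Nat.sub_zero, Nat.cast_zero, sub_zero]
    | succ i => rw [seqAppend, ih (Nat.le_of_succ_le_succ hi), Nat.add_sub_add_right]

lemma dependsOnRecent_recentStates (m : ℕ) (g : (Fin (m + 1) → H) → ℝ) :
    DependsOnRecent m fun w : History H E => g (recentStates m w) :=
  fun _ _ _ hxx' => congrArg g (funext fun i => hxx' _ (Nat.sub_le m i))

end Algebraic

section Measurable

variable {H E : Type*} [MeasurableSpace H] [MeasurableSpace E] {S : H × E → H}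

lemma measurable_recentStates (m : ℕ) : Measurable (recentStates m : History H E → _) := by
  unfold recentStates
  fun_prop

lemma measurable_historyFrom (hS : Measurable S) (u : H) (k : ℕ) :
    Measurable (historyFrom (E := E) S u k) := by
  induction k with
  | zero => exact measurable_const.prodMk measurable_id
  | succ k ih =>
    exact (measurable_step hS).comp
      (f := fun ξ : ℕ → E => (historyFrom S u k fun n => ξ (n + 1), ξ 0))
      ((ih.comp (by fun_prop)).prodMk (measurable_pi_apply 0))

variable {κ : Kernel (ℕ → E) E} [IsMarkovKernel κ] {σ : Measure (ℕ → E)}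
  [IsProbabilityMeasure σ] {f : History H E → ℝ}

lemma integral_historyFrom_add_one (hS : Measurable S)
    (hσ : (σ ⊗ₘ κ).map (fun p => seqAppend p.1 p.2) = σ) (hf : IsBoundedMeasurable f) (u : H)
    (k : ℕ) :
    ∫ ξ, f (historyFrom S u (k + 1) ξ) ∂σ =
      ∫ ξ, markovOp (historyKernel S κ) f (historyFrom S u k ξ) ∂σ := by
  have hm := hf.comp (measurable_historyFrom hS u (k + 1))
  conv_lhs => rw [← hσ]
  rw [integral_map measurable_seqAppend.aemeasurable hm.measurable.aestronglyMeasurable,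
    Measure.integral_compProd ((hm.comp measurable_seqAppend).integrable _)]
  simp only [markovOp_historyKernel hS hf, historyFrom_snd]
  rfl

lemma integral_historyFrom_add (hS : Measurable S)
    (hσ : (σ ⊗ₘ κ).map (fun p => seqAppend p.1 p.2) = σ) (hf : IsBoundedMeasurable f) (u : H)
    (j k : ℕ) :
    ∫ ξ, f (historyFrom S u (j + k) ξ) ∂σ =
      ∫ ξ, markovOp (historyKernel S κ ^ k) f (historyFrom S u j ξ) ∂σ := by
  have := isMarkovKernel_historyKernel hS κ
  have := isMarkovKernel_pow (historyKernel S κ)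
  induction k generalizing j with
  | zero => rw [markovOp_pow_zero _ hf, add_zero]
  | succ k ih =>
    rw [markovOp_pow_succ _ hf, ← integral_historyFrom_add_one hS hσ (hf.markovOp _), ← ih,
      add_assoc, add_comm 1]

end Measurable

namespace DrivenSystem

variable {H E : Type*} [TopologicalSpace H] [MeasurableSpace H] [NormedAddCommGroup E]
  [MeasureSpace E] {X : Set H} {K : Set E} {S : H × E → H} {𝓔 : Set (ℕ → E)} {ι L : ℝ}
  {ρ : (ℕ → E) → E → ℝ} {κ : Kernel (ℕ → E) E}

lemma oscLipBound_indicator_recentStates (D : DrivenSystem X K S 𝓔 ι L ρ κ) {m : ℕ}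
    {Γ : Set (Fin (m + 1) → H)} (hΓ : MeasurableSet Γ) :
    OscLipBound X 𝓔 ι 1 (1 * pastWeight K ι L)
      fun w => Γ.indicator (fun _ => (1 : ℝ)) (recentStates m w) where
  toIsBoundedMeasurable :=
    (isBoundedMeasurable_indicator_one hΓ).comp (measurable_recentStates m)
  sub_le w _ w' _ := by
    have hle := indicator_le_self' (s := Γ) (f := fun _ => (1 : ℝ)) (fun _ _ => zero_le_one)
      (recentStates m w)
    have hge := indicator_nonneg (s := Γ) (f := fun _ => (1 : ℝ)) (fun _ _ => zero_le_one)
      (recentStates m w')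
    linarith
  sub_le_dPast _ _ _ _ _ := (sub_self _).trans_le
    (mul_nonneg (mul_nonneg zero_le_one D.pastWeight_nonneg) (D.dPast_nonneg _ _))

variable [BorelSpace E] [IsFiniteMeasureOnCompacts (volume : Measure E)] [IsMarkovKernel κ]
  {σ : Measure (ℕ → E)} [IsProbabilityMeasure σ]

lemma recentStates_law_sub_le (D : DrivenSystem X K S 𝓔 ι L ρ κ) {γ C : ℝ}
    (hdecay : OscDecay X K S 𝓔 ι L κ γ C)
    (hσ : (σ ⊗ₘ κ).map (fun p => seqAppend p.1 p.2) = σ) (hσ𝓔 : ∀ᵐ ξ ∂σ, ξ ∈ 𝓔) {m : ℕ}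
    {Γ : Set (Fin (m + 1) → H)} (hΓ : MeasurableSet Γ) {u u' : H} (hu : u ∈ X) (hu' : u' ∈ X)
    (j j' k : ℕ) :
    (σ.map fun ξ => recentStates m (historyFrom S u (j + (m + k)) ξ)).real Γ -
      (σ.map fun ξ => recentStates m (historyFrom S u' (j' + (m + k)) ξ)).real Γ ≤
        C * Real.exp (-γ * k) := by
  have := isMarkovKernel_historyKernel D.measurable κ
  have := isMarkovKernel_pow (historyKernel S κ)
  set f : History H E → ℝ := fun w => Γ.indicator (fun _ => 1) (recentStates m w)
  have hf := D.oscLipBound_indicator_recentStates (m := m) hΓ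
  have hTf := D.oscLipBound_markovOp_pow zero_le_one hf m
  have hTf0 : DependsOnRecent 0 (markovOp (historyKernel S κ ^ m) f) := by
    simpa only [Nat.sub_self] using (dependsOnRecent_recentStates m _).markovOp_pow D.measurable
      hf.toIsBoundedMeasurable m
  have hlaw (v : H) (i : ℕ) :
      (σ.map fun ξ => recentStates m (historyFrom S v (i + (m + k)) ξ)).real Γ =
        ∫ ξ, markovOp (historyKernel S κ ^ k) (markovOp (historyKernel S κ ^ m) f)
          (historyFrom S v i ξ) ∂σ := by
    have hmeas := (measurable_recentStates m).comp
      (measurable_historyFrom D.measurable v (i + (m + k)))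
    rw [← markovOp_pow_add _ hf.toIsBoundedMeasurable,
      ← integral_historyFrom_add D.measurable hσ hf.toIsBoundedMeasurable,
      ← integral_indicator_one hΓ]
    exact integral_map hmeas.aemeasurable
      (measurable_const.indicator hΓ).aestronglyMeasurable
  have hint (v : H) (i : ℕ) := ((hTf.toIsBoundedMeasurable.markovOp (historyKernel S κ ^ k)).comp
    (measurable_historyFrom D.measurable v i)).integrable σ
  have hadm {v : H} (hv : v ∈ X) (i : ℕ) {ξ : ℕ → E} (hξ : ξ ∈ 𝓔) :
      historyFrom S v i ξ ∈ admissible X 𝓔 :=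
    ⟨historyFrom_fst_mem D.map_mem hv i (D.mem ξ hξ), (historyFrom_snd v i ξ).symm ▸ hξ⟩
  rw [hlaw, hlaw, ← integral_sub (hint u j) (hint u' j')]
  refine (integral_mono_ae ((hint u j).sub (hint u' j')) (integrable_const
    (C * Real.exp (-γ * k))) ?_).trans (by simp)
  filter_upwards [hσ𝓔] with ξ hξ
  exact (hdecay 1 _ hTf hTf0 k _ (hadm hu j hξ) _ (hadm hu' j' hξ)).trans_eq (mul_one _)

end DrivenSystem

end Windows

section StationaryNoise

section Support

lemma msupport_eq_support {α : Type*} [TopologicalSpace α] [MeasurableSpace α] (σ : Measure α) :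
    msupport σ = σ.support := by
  ext x
  rw [Measure.mem_support_iff_forall]
  refine ⟨fun hx U hU => ?_, fun hx U hU hxU => hx U (hU.mem_nhds hxU)⟩
  obtain ⟨V, hVU, hV, hxV⟩ := _root_.mem_nhds_iff.1 hU
  exact (hx V hV hxV).trans_le (measure_mono hVU)

lemma isClosed_msupport {α : Type*} [TopologicalSpace α] [MeasurableSpace α] (σ : Measure α) :
    IsClosed (msupport σ) :=
  msupport_eq_support σ ▸ Measure.isClosed_support

lemma msupport_mem_ae {α : Type*} [TopologicalSpace α] [HereditarilyLindelofSpace α]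
    [MeasurableSpace α] (σ : Measure α) : ∀ᵐ x ∂σ, x ∈ msupport σ :=
  msupport_eq_support σ ▸ Measure.support_mem_ae

lemma mem_of_mem_msupport {α : Type*} [TopologicalSpace α] [MeasurableSpace α] {σ : Measure α}
    {F : Set α} (hF : IsClosed F) (hσF : ∀ᵐ x ∂σ, x ∈ F) {x : α} (hx : x ∈ msupport σ) : x ∈ F :=
  by_contra fun hxF => (hx Fᶜ hF.isOpen_compl hxF).ne' hσF

lemma continuous_of_continuousOn_prod_univ {α β γ : Type*} [TopologicalSpace α]
    [TopologicalSpace β] [TopologicalSpace γ] {A : Set α} {ρ : α → β → γ}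
    (hρ : ContinuousOn (fun p : α × β => ρ p.1 p.2) (A ×ˢ univ))
    {x : α} (hx : x ∈ A) : Continuous (ρ x) :=
  hρ.comp_continuous (Continuous.prodMk_right x) fun _ => ⟨hx, mem_univ _⟩

lemma exists_isMarkovKernel_withDensity {α β : Type*} [TopologicalSpace α]
    [MeasurableSpace α] [TopologicalSpace β] [MeasurableSpace β] [OpensMeasurableSpace (α × β)]
    [Nonempty β] {ν : Measure β} [SFinite ν] {A : Set α} (hA : MeasurableSet A)
    {ρ : α → β → ℝ} (hρ : ContinuousOn (fun p : α × β => ρ p.1 p.2) (A ×ˢ univ))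
    (hprob : ∀ x ∈ A, IsProbabilityMeasure (ν.withDensity fun y => ENNReal.ofReal (ρ x y))) :
    ∃ κ : Kernel α β, IsMarkovKernel κ ∧
      ∀ x ∈ A, κ x = ν.withDensity fun y => ENNReal.ofReal (ρ x y) := by
  classical
  set f : α → β → ENNReal := fun x y =>
    (A ×ˢ univ).piecewise (fun p => ENNReal.ofReal (ρ p.1 p.2)) (fun _ => 0) (x, y)
  have hf : Measurable (Function.uncurry f) :=
    (ENNReal.continuous_ofReal.comp_continuousOn hρ).measurable_piecewise continuousOn_const
      (hA.prod MeasurableSet.univ)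
  have hfA : ∀ x ∈ A, f x = fun y => ENNReal.ofReal (ρ x y) := fun x hx =>
    funext fun y => piecewise_eq_of_mem _ _ _ ⟨hx, mem_univ y⟩
  set κ : Kernel α β := Kernel.piecewise hA (Kernel.withDensity (Kernel.const _ ν) f)
    (Kernel.const _ (Measure.dirac (Classical.arbitrary β)))
  have hκ : ∀ x ∈ A, κ x = ν.withDensity fun y => ENNReal.ofReal (ρ x y) := fun x hx => by
    rw [Kernel.piecewise_apply, if_pos hx, Kernel.withDensity_apply _ hf, hfA x hx,
      Kernel.const_apply]
  refine ⟨κ, ⟨fun x => ?_⟩, hκ⟩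
  by_cases hx : x ∈ A
  · exact hκ x hx ▸ hprob x hx
  · rw [Kernel.piecewise_apply, if_neg hx, Kernel.const_apply]
    infer_instance

variable {α β : Type*} [TopologicalSpace α] [HereditarilyLindelofSpace α] [MeasurableSpace α]
  [OpensMeasurableSpace α] [TopologicalSpace β] [MeasurableSpace β] [OpensMeasurableSpace β]
  {ν : Measure β}

lemma withDensity_pos_of_isOpen [ν.IsOpenPosMeasure] {g : β → ℝ} (hg : Continuous g) {V : Set β}
    (hV : IsOpen V) (hne : V.Nonempty) (hpos : ∀ y ∈ V, 0 < g y) :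
    0 < ν.withDensity (fun y => ENNReal.ofReal (g y)) V := by
  rw [withDensity_apply _ hV.measurableSet,
    setLIntegral_pos_iff (by fun_prop)]
  refine (hV.measure_pos ν hne).trans_le (measure_mono fun y hy => ⟨?_, hy⟩)
  exact (ENNReal.ofReal_pos.2 (hpos y hy)).ne'

lemma compProd_pos_of_density_pos [ν.IsOpenPosMeasure] {σ : Measure α} [SFinite σ]
    {κ : Kernel α β} [IsSFiniteKernel κ] {ρ : α → β → ℝ}
    (hρ : ContinuousOn (fun p : α × β => ρ p.1 p.2) (msupport σ ×ˢ univ))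
    (hκ : ∀ x ∈ msupport σ, κ x = ν.withDensity fun y => ENNReal.ofReal (ρ x y)) {x : α}
    (hx : x ∈ msupport σ) {y : β} (hy : 0 < ρ x y) {W : Set (α × β)} (hW : W ∈ nhds (x, y)) :
    0 < (σ ⊗ₘ κ) W := by
  obtain ⟨W', hW', hpos⟩ := mem_nhdsWithin_iff_exists_mem_nhds_inter.1
    ((hρ (x, y) ⟨hx, mem_univ y⟩).preimage_mem_nhdsWithin (Ioi_mem_nhds hy))
  obtain ⟨U, V, hU, hxU, hV, hyV, hUV⟩ := mem_nhds_prod_iff'.1 (Filter.inter_mem hW hW')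
  have hκV : ∀ x' ∈ U ∩ msupport σ, 0 < κ x' V := fun x' hx' => by
    rw [hκ x' hx'.2]
    exact withDensity_pos_of_isOpen (continuous_of_continuousOn_prod_univ hρ hx'.2) hV ⟨y, hyV⟩
      fun y' hy' => hpos (a := (x', y')) ⟨(hUV ⟨hx'.1, hy'⟩).2, hx'.2, mem_univ y'⟩
  refine lt_of_lt_of_le ?_ (measure_mono (hUV.trans inter_subset_left))
  rw [Measure.compProd_apply_prod hU.measurableSet hV.measurableSet,
    setLIntegral_pos_iff (κ.measurable_coe hV.measurableSet)]
  refine (hx U hU hxU).trans_le (measure_mono_ae ?_)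
  filter_upwards [msupport_mem_ae σ] with x' hx' hx'U using ⟨(hκV x' ⟨hx'U, hx'⟩).ne', hx'U⟩

end Support

section Past

variable {E : Type*} [NormedAddCommGroup E] {K : Set E} {ι L : ℝ} {ρ : (ℕ → E) → E → ℝ}

lemma continuousOn_density {𝓔 : Set (ℕ → E)} (hι : 1 < ι) (hK : Bornology.IsBounded K)
    (h𝓔 : ∀ ξ ∈ 𝓔, ∀ n, ξ n ∈ K)
    (hρ : ∀ ξ ∈ 𝓔, ∀ ξ' ∈ 𝓔, ∀ y y', |ρ ξ y - ρ ξ' y'| ≤ L * (dPast ι ξ ξ' + ‖y - y'‖)) :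
    ContinuousOn (fun p : (ℕ → E) × E => ρ p.1 p.2) (𝓔 ×ˢ univ) := by
  rintro ⟨ξ, y⟩ ⟨hξ, -⟩
  have hbound : ContinuousWithinAt (fun p : (ℕ → E) × E => L * (dPast ι p.1 ξ + ‖p.2 - y‖))
      (𝓔 ×ˢ univ) (ξ, y) := by
    have hd := ((continuousOn_dPast hι hK (h𝓔 ξ hξ)).comp continuousOn_fst
      fun p (hp : p ∈ 𝓔 ×ˢ (univ : Set E)) => h𝓔 p.1 hp.1) (ξ, y) ⟨hξ, mem_univ y⟩
    exact continuousWithinAt_const.mul (hd.add (by fun_prop))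
  have hlim := hbound.tendsto
  simp only [dPast_self, sub_self, norm_zero, add_zero, mul_zero] at hlim
  refine tendsto_iff_norm_sub_tendsto_zero.2
    (squeeze_zero' (.of_forall fun _ => norm_nonneg _) ?_ hlim)
  filter_upwards [self_mem_nhdsWithin] with p hp using hρ p.1 hp.1 ξ hξ p.2 y

variable [MeasureSpace E] [BorelSpace E] [SecondCountableTopology E]
  [(volume : Measure E).IsOpenPosMeasure]

lemma lipschitzNoise_msupport (hι : 1 < ι) (hK : IsCompact K) {σ : Measure (ℕ → E)} [SFinite σ]
    (hσK : ∀ ξ ∈ msupport σ, ∀ n, ξ n ∈ K) {κ : Kernel (ℕ → E) E} [IsSFiniteKernel κ]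
    (hσ : (σ ⊗ₘ κ).map (fun p => seqAppend p.1 p.2) = σ) (hρ0 : ∀ ξ y, 0 ≤ ρ ξ y)
    (hκ : ∀ ξ ∈ msupport σ, κ ξ = volume.withDensity fun y => ENNReal.ofReal (ρ ξ y))
    (hL : 0 ≤ L) (hρ : ∀ ξ ∈ msupport σ, ∀ ξ' ∈ msupport σ, ∀ y y',
      |ρ ξ y - ρ ξ' y'| ≤ L * (dPast ι ξ ξ' + ‖y - y'‖)) :
    LipschitzNoise K (msupport σ) ι L ρ κ where
  one_lt := hι
  isCompact := hK
  isClosed := isClosed_msupport σ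
  mem := hσK
  seqAppend_mem ξ hξ := by
    have hcont := continuousOn_density hι hK.isBounded hσK hρ
    have hm : Measurable fun y => ENNReal.ofReal (ρ ξ y) :=
      (continuous_of_continuousOn_prod_univ hcont hξ).measurable.ennreal_ofReal
    rw [hκ ξ hξ, ae_withDensity_iff hm]
    refine .of_forall fun y hy U hU hmem => ?_
    rw [← hσ, Measure.map_apply measurable_seqAppend hU.measurableSet]
    exact compProd_pos_of_density_pos hcont hκ hξ
      (ENNReal.ofReal_pos.1 (pos_iff_ne_zero.2 hy))
      (continuous_seqAppend.continuousAt.preimage_mem_nhds (hU.mem_nhds hmem))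
  density_nonneg := hρ0
  eq_withDensity := hκ
  lipschitz_nonneg := hL
  abs_density_sub_le := hρ

end Past

section Stationarity

/-- The past `(η_0, η_{-1}, …)` of a process indexed by `ℤ`, in the encoding of `dPast`. -/
def past {Ω E : Type*} (η : ℤ → Ω → E) (ω : Ω) (n : ℕ) : E :=
  η (-(n : ℤ)) ω

lemma map_prodMk_eq_compProd {Ω α β : Type*} {mΩ : MeasurableSpace Ω} [MeasurableSpace α]
    [MeasurableSpace β] {P : Measure Ω} [IsFiniteMeasure P] {Y : Ω → α} {Z : Ω → β}
    (hY : Measurable Y) (hZ : Measurable Z) {Q : α → Measure β} {κ : Kernel α β}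
    [IsFiniteKernel κ] (hQ : ∀ᵐ x ∂P.map Y, Q x = κ x)
    (hcond : ∀ A, MeasurableSet A → ∀ B, MeasurableSet B →
      P {ω | Y ω ∈ B ∧ Z ω ∈ A} = ∫⁻ ω in {ω | Y ω ∈ B}, Q (Y ω) A ∂P) :
    P.map (fun ω => (Y ω, Z ω)) = P.map Y ⊗ₘ κ := by
  refine Measure.ext_prod fun {B A} hB hA => ?_
  rw [Measure.map_apply (hY.prodMk hZ) (hB.prod hA), Measure.compProd_apply_prod hB hA,
    setLIntegral_map hB (κ.measurable_coe hA) hY]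
  refine (hcond A hA B hB).trans (lintegral_congr_ae (ae_restrict_of_ae ?_))
  filter_upwards [ae_of_ae_map hY.aemeasurable hQ] with ω hω using by rw [hω]

variable {Ω E : Type*} {mΩ : MeasurableSpace Ω} [MeasurableSpace E] {P : Measure Ω}
  {η : ℤ → Ω → E}

lemma measurable_past (hη : ∀ k, Measurable (η k)) : Measurable (past η) :=
  measurable_pi_lambda _ fun _ => hη _

lemma map_past_shift (hη : ∀ k, Measurable (η k))
    (hstat : P.map (fun ω k => η (k + 1) ω) = P.map fun ω k => η k ω) (n : ℕ) :
    P.map (fun ω (j : ℕ) => η (n - j) ω) = P.map (past η) := by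
  induction n with
  | zero =>
    simp only [Nat.cast_zero, zero_sub]
    rfl
  | succ n ih =>
    have hshift := congrArg (Measure.map fun (z : ℤ → E) (j : ℕ) => z (n - j)) hstat
    rw [Measure.map_map (by fun_prop) (by fun_prop), Measure.map_map (by fun_prop)
      (by fun_prop)] at hshift
    rw [← ih]
    refine Eq.trans ?_ hshift
    congr 1
    funext ω j
    simp only [Function.comp_apply, Nat.cast_add_one, sub_add_eq_add_sub]

lemma map_seqAppend_compProd_past [IsFiniteMeasure P] (hη : ∀ k, Measurable (η k))
    (hstat : P.map (fun ω k => η (k + 1) ω) = P.map fun ω k => η k ω) {Q : (ℕ → E) → Measure E}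
    {κ : Kernel (ℕ → E) E} [IsFiniteKernel κ] (hQ : ∀ᵐ ξ ∂P.map (past η), Q ξ = κ ξ)
    (hcond : ∀ A, MeasurableSet A → ∀ B, MeasurableSet B →
      P {ω | past η ω ∈ B ∧ η 1 ω ∈ A} = ∫⁻ ω in {ω | past η ω ∈ B}, Q (past η ω) A ∂P) :
    (P.map (past η) ⊗ₘ κ).map (fun p => seqAppend p.1 p.2) = P.map (past η) := by
  have hpast := measurable_past hη
  rw [← map_prodMk_eq_compProd hpast (hη 1) hQ hcond,
    Measure.map_map measurable_seqAppend (hpast.prodMk (hη 1)),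
    ← map_past_shift hη hstat 1]
  congr 1
  funext ω j
  cases j with
  | zero => simp [seqAppend]
  | succ j => simp [seqAppend, past]

end Stationarity

end StationaryNoise

section Trajectories

/-- The random trajectory issued from `u` of the system driven by `η_1, η_2, …`. -/
def randomTraj {Ω H E : Type*} (S : H × E → H) (u : H) (η : ℤ → Ω → E) (n : ℕ) (ω : Ω) : H :=
  traj S u (fun j => η j ω) n

/-- The joint law of `m + 1` consecutive values, from time `k` on, of the process `x`. -/
noncomputable def windowLaw {Ω H : Type*} [MeasurableSpace Ω] [MeasurableSpace H] (P : Measure Ω)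
    (x : ℕ → Ω → H) (m k : ℕ) : Measure (Fin (m + 1) → H) :=
  P.map fun ω i => x (k + i) ω

lemma randomTraj_mem {Ω H E : Type*} {X : Set H} {K : Set E} {S : H × E → H}
    (hmap : ∀ u ∈ X, ∀ y ∈ K, S (u, y) ∈ X) {u : H} (hu : u ∈ X) {η : ℤ → Ω → E} {ω : Ω}
    (hη : ∀ k, η k ω ∈ K) (n : ℕ) : randomTraj S u η n ω ∈ X := by
  induction n with
  | zero => exact hu
  | succ n ih => exact hmap _ ih _ (hη _)

variable {Ω H E : Type*} [MeasurableSpace Ω] [MeasurableSpace H]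

lemma measurable_randomTraj [MeasurableSpace E] {S : H × E → H} (hS : Measurable S) (u : H)
    {η : ℤ → Ω → E} (hη : ∀ k, Measurable (η k)) (n : ℕ) :
    Measurable (randomTraj S u η n) := by
  induction n with
  | zero => exact measurable_const
  | succ n ih => exact hS.comp (ih.prodMk (hη _))

lemma windowLaw_randomTraj [MeasurableSpace E] {P : Measure Ω} {S : H × E → H}
    (hS : Measurable S) (u : H) {η : ℤ → Ω → E} (hη : ∀ k, Measurable (η k))
    (hstat : P.map (fun ω k => η (k + 1) ω) = P.map fun ω k => η k ω) (m k : ℕ) :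
    windowLaw P (randomTraj S u η) m k =
      (P.map (past η)).map fun ξ => recentStates m (historyFrom S u (k + m) ξ) := by
  have hstates : Measurable fun ξ => recentStates m (historyFrom (E := E) S u (k + m) ξ) :=
    (measurable_recentStates m).comp (measurable_historyFrom hS u (k + m))
  rw [← map_past_shift hη hstat (k + m), Measure.map_map hstates (by fun_prop)]
  refine congrArg P.map (funext fun ω => funext fun i => ?_)
  have hstate := historyFrom_fst_eq_traj (S := S) u (fun j => η j ω) (k + m)
    (show m - (i : ℕ) ≤ k + m by omega)
  rw [show k + m - (m - i) = k + i by omega] at hstate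
  exact hstate.symm

lemma DrivenSystem.abs_windowLaw_sub_le [TopologicalSpace H] [NormedAddCommGroup E]
    [MeasureSpace E] [BorelSpace E] [IsFiniteMeasureOnCompacts (volume : Measure E)] {X : Set H}
    {K : Set E} {S : H × E → H} {𝓔 : Set (ℕ → E)} {ι L : ℝ} {ρ : (ℕ → E) → E → ℝ}
    {κ : Kernel (ℕ → E) E} [IsMarkovKernel κ] (D : DrivenSystem X K S 𝓔 ι L ρ κ) {γ C : ℝ}
    (hdecay : OscDecay X K S 𝓔 ι L κ γ C) {P : Measure Ω} [IsProbabilityMeasure P]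
    {η : ℤ → Ω → E} (hη : ∀ k, Measurable (η k))
    (hstat : P.map (fun ω k => η (k + 1) ω) = P.map fun ω k => η k ω)
    (hσ : (P.map (past η) ⊗ₘ κ).map (fun p => seqAppend p.1 p.2) = P.map (past η))
    (hσ𝓔 : ∀ᵐ ξ ∂P.map (past η), ξ ∈ 𝓔) {u u' : H} (hu : u ∈ X) (hu' : u' ∈ X) {m k k' : ℕ}
    (hk : k ≤ k') {Γ : Set (Fin (m + 1) → H)} (hΓ : MeasurableSet Γ) :
    |(windowLaw P (randomTraj S u η) m k).real Γ -
      (windowLaw P (randomTraj S u' η) m k').real Γ| ≤ C * Real.exp (-γ * k) := by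
  have := Measure.isProbabilityMeasure_map (μ := P) (measurable_past hη).aemeasurable
  have hle := D.recentStates_law_sub_le hdecay hσ hσ𝓔 hΓ hu hu' 0 (k' - k) k
  have hge := D.recentStates_law_sub_le hdecay hσ hσ𝓔 hΓ hu' hu (k' - k) 0 k
  rw [show 0 + (m + k) = k + m by omega, show k' - k + (m + k) = k' + m by omega] at hle hge
  rw [windowLaw_randomTraj D.measurable u hη hstat, windowLaw_randomTraj D.measurable u' hη
    hstat]
  exact abs_sub_le_iff.2 ⟨hle, hge⟩

end Trajectories

section LimitMeasure

section Portmanteau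

variable {Z Y : Type*} [TopologicalSpace Z] [MeasurableSpace Z] [BorelSpace Z]

lemma exists_ultrafilter_tendsto_of_isCompact [T2Space Z] {M : ℕ → ProbabilityMeasure Z}
    {A : Set Z} (hA : IsCompact A) (hM : ∀ k, (M k : Measure Z) Aᶜ = 0) :
    ∃ F : Ultrafilter ℕ, (F : Filter ℕ) ≤ Filter.atTop ∧
      ∃ μ : ProbabilityMeasure Z, Filter.Tendsto M F (nhds μ) ∧ (μ : Measure Z) Aᶜ = 0 := by
  have hcompact := isCompact_setOfPred_probabilityMeasure_mass_eq_compl_isCompact_le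
    (E := Z) (u := fun _ => 0) (K := fun _ => A) tendsto_const_nhds (fun _ => hA)
    (Or.inr fun _ _ _ => le_rfl)
  obtain ⟨μ, hμA, hμ⟩ := hcompact.ultrafilter_le_nhds ((Filter.hyperfilter ℕ).map M)
    (Filter.le_principal_iff.2 (Filter.mem_map.2 (Filter.Eventually.of_forall
      fun k _ => (((M k).null_iff_toMeasure_null _).2 (hM k)).le)))
  exact ⟨Filter.hyperfilter ℕ, Nat.hyperfilter_le_atTop, μ, hμ,
    (μ.null_iff_toMeasure_null _).1 (nonpos_iff_eq_zero.1 (hμA 0))⟩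

variable [HasOuterApproxClosed Z] {ι : Type*} {F : Filter ι} [F.NeBot]
  {M : ι → ProbabilityMeasure Z} {μ : ProbabilityMeasure Z} [TopologicalSpace Y]
  [MeasurableSpace Y] [BorelSpace Y] {p : Z → Y} {ν : Measure Y} {ε : ℝ}

lemma real_le_map_real_add_of_tendsto_of_isClosed (hM : Filter.Tendsto M F (nhds μ))
    (hp : Continuous p) {A : Set Y} (hA : IsClosed A)
    (hν : ∀ᶠ i in F, ν.real A ≤ ((M i : Measure Z).map p).real A + ε) :
    ν.real A ≤ ((μ : Measure Z).map p).real A + ε := by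
  have hle : ENNReal.ofReal (ν.real A - ε) ≤ (μ : Measure Z) (p ⁻¹' A) := by
    refine le_trans ?_ (ProbabilityMeasure.limsup_measure_closed_le_of_tendsto hM (hA.preimage hp))
    refine Filter.le_limsup_of_frequently_le (hν.mono fun i hi => ?_).frequently
    rw [measureReal_def (Measure.map p _), Measure.map_apply hp.measurable hA.measurableSet] at hi
    exact ENNReal.ofReal_le_of_le_toReal (sub_le_iff_le_add.2 hi)
  rw [measureReal_def (Measure.map p _), Measure.map_apply hp.measurable hA.measurableSet]
  exact sub_le_iff_le_add.1 ((ENNReal.ofReal_le_iff_le_toReal (measure_ne_top _ _)).1 hle)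

variable [TopologicalSpace.PseudoMetrizableSpace Y] [IsProbabilityMeasure ν]

lemma real_le_map_real_add_of_tendsto (hM : Filter.Tendsto M F (nhds μ)) (hp : Continuous p)
    (hν : ∀ A, MeasurableSet A → ∀ᶠ i in F, ν.real A ≤ ((M i : Measure Z).map p).real A + ε)
    {A : Set Y} (hA : MeasurableSet A) : ν.real A ≤ ((μ : Measure Z).map p).real A + ε := by
  have := Measure.isProbabilityMeasure_map (μ := (μ : Measure Z)) hp.measurable.aemeasurable
  refine le_of_forall_pos_le_add fun δ hδ => ?_
  obtain ⟨B, hBA, hB, hlt⟩ := hA.exists_isClosed_lt_add (μ := ν) (measure_ne_top ν A)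
    (ENNReal.ofReal_pos.2 hδ).ne'
  have happrox : ν.real A ≤ ν.real B + δ := by
    have hreal := ENNReal.toReal_mono (by finiteness) hlt.le
    rwa [ENNReal.toReal_add (by finiteness) (by finiteness), ENNReal.toReal_ofReal hδ.le] at hreal
  have hclosed := real_le_map_real_add_of_tendsto_of_isClosed hM hp hB (hν B hB.measurableSet)
  linarith [measureReal_mono (μ := (μ : Measure Z).map p) hBA]

lemma abs_real_sub_map_real_le_of_tendsto (hM : Filter.Tendsto M F (nhds μ)) (hp : Continuous p)
    (hν : ∀ A, MeasurableSet A → ∀ᶠ i in F, ν.real A ≤ ((M i : Measure Z).map p).real A + ε)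
    {A : Set Y} (hA : MeasurableSet A) : |ν.real A - ((μ : Measure Z).map p).real A| ≤ ε := by
  have := Measure.isProbabilityMeasure_map (μ := (μ : Measure Z)) hp.measurable.aemeasurable
  have hle := real_le_map_real_add_of_tendsto hM hp hν hA
  have hge := real_le_map_real_add_of_tendsto hM hp hν hA.compl
  rw [probReal_compl_eq_one_sub hA, probReal_compl_eq_one_sub hA] at hge
  exact abs_sub_le_iff.2 ⟨by linarith, by linarith⟩

end Portmanteau

/-- The restriction of a two-sided sequence to the `m + 1` consecutive times from `a` on. -/
def window {H : Type*} (m : ℕ) (a : ℤ) (f : ℤ → H) (i : Fin (m + 1)) : H :=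
  f (a + (i : ℕ))

lemma window_zero {H : Type*} (m : ℕ) : window (H := H) m 0 = fun f i => f (i : ℕ) :=
  funext fun f => funext fun _ => congrArg f (zero_add _)

section Shift

variable {H : Type*} [MeasurableSpace H]

lemma measurable_window (m : ℕ) (a : ℤ) : Measurable (window m a : (ℤ → H) → _) := by
  unfold window
  fun_prop

lemma map_shift_eq_of_map_window_eq {μ : Measure (ℤ → H)} [IsFiniteMeasure μ]
    (hμ : ∀ m a, μ.map (window m (a + 1)) = μ.map (window m a)) :
    μ.map (fun f n => f (n + 1)) = μ := by
  refine IsProjectiveLimit.unique (P := fun I : Finset ℤ => μ.map I.restrict) (fun I => ?_)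
    fun _ => rfl
  obtain ⟨N, hN⟩ : ∃ N : ℕ, ∀ i ∈ I, -(N : ℤ) ≤ i ∧ i ≤ N := by
    refine ⟨I.sup Int.natAbs, fun i hi => ?_⟩
    have hle : i.natAbs ≤ I.sup Int.natAbs := Finset.le_sup (f := Int.natAbs) hi
    omega
  have hlt (i : I) : ((i : ℤ) + N).toNat < 2 * N + 1 := by
    have := hN i i.2
    omega
  set g : (Fin (2 * N + 1) → H) → I → H := fun w i => w ⟨((i : ℤ) + N).toNat, hlt i⟩
  have hg (a : ℤ) : (μ.map (window (2 * N) (-N + a))).map g = μ.map fun f (i : I) => f (i + a) := by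
    rw [Measure.map_map (by fun_prop) (measurable_window _ _)]
    refine congrArg μ.map (funext fun f => funext fun i => ?_)
    have := hN i i.2
    simp only [g, window, Function.comp_apply]
    congr 1
    omega
  calc (μ.map fun f n => f (n + 1)).map I.restrict
      = (μ.map (window (2 * N) (-N + 1))).map g := by
        rw [Measure.map_map (by fun_prop) (by fun_prop), hg]
        rfl
    _ = (μ.map (window (2 * N) (-N + 0))).map g := by rw [hμ, add_zero]
    _ = μ.map I.restrict := by
        rw [hg]
        simp only [add_zero]
        rfl

end Shift

section Limit

variable {Ω H : Type*} [MeasurableSpace Ω] {P : Measure Ω} [MeasurableSpace H]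
  {x : ℕ → Ω → H}

lemma map_window_eq_windowLaw (hx : ∀ n, Measurable (x n)) {n : ℕ} {a : ℤ}
    (hna : 0 ≤ n + a) (m : ℕ) :
    (P.map fun ω (j : ℤ) => x (n + j).toNat ω).map (window m a) =
      windowLaw P x m (n + a).toNat := by
  rw [Measure.map_map (measurable_window m a) (by fun_prop)]
  refine congrArg P.map (funext fun ω => funext fun i => ?_)
  simp only [Function.comp_apply, window]
  congr 1
  omega

variable [IsProbabilityMeasure P]

lemma isProbabilityMeasure_windowLaw (hx : ∀ n, Measurable (x n)) (m k : ℕ) :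
    IsProbabilityMeasure (windowLaw P x m k) :=
  Measure.isProbabilityMeasure_map (by fun_prop)

variable [TopologicalSpace H] [TopologicalSpace.MetrizableSpace H] [SecondCountableTopology H]
  [BorelSpace H] {X : Set H} {r : ℕ → ℝ}

lemma exists_abs_windowLaw_sub_window_le (hX : IsCompact X) (hx : ∀ n, Measurable (x n))
    (hxX : ∀ᵐ ω ∂P, ∀ n, x n ω ∈ X)
    (hr : ∀ m k k' Γ, k ≤ k' → MeasurableSet Γ →
      |(windowLaw P x m k).real Γ - (windowLaw P x m k').real Γ| ≤ r k) :
    ∃ μ : Measure (ℤ → H), IsProbabilityMeasure μ ∧ μ {f | ∀ n, f n ∈ X} = 1 ∧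
      ∀ m a k Γ, MeasurableSet Γ →
        |(windowLaw P x m k).real Γ - (μ.map (window m a)).real Γ| ≤ r k := by
  have hXZ : IsCompact {f : ℤ → H | ∀ n, f n ∈ X} := isCompact_pi_infinite fun _ => hX
  have hmeas (n : ℕ) : Measurable fun ω (j : ℤ) => x (n + j).toNat ω := by fun_prop
  set M : ℕ → ProbabilityMeasure (ℤ → H) := fun n =>
    ⟨P.map fun ω j => x (n + j).toNat ω, Measure.isProbabilityMeasure_map (hmeas n).aemeasurable⟩
  have hMX (n : ℕ) : (M n : Measure (ℤ → H)) {f : ℤ → H | ∀ n, f n ∈ X}ᶜ = 0 := by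
    refine (ae_map_iff (hmeas n).aemeasurable hXZ.measurableSet).2 ?_
    filter_upwards [hxX] with ω hω using fun j => hω _
  obtain ⟨F, hF, μ, hμ, hμX⟩ := exists_ultrafilter_tendsto_of_isCompact hXZ hMX
  refine ⟨μ, inferInstance, (prob_compl_eq_zero_iff hXZ.measurableSet).1 hμX, fun m a k Γ hΓ => ?_⟩
  have := isProbabilityMeasure_windowLaw (P := P) hx m k
  refine abs_real_sub_map_real_le_of_tendsto hμ (by unfold window; fun_prop) (fun A hA => ?_) hΓ
  filter_upwards [hF (Filter.eventually_ge_atTop (k + a.natAbs))] with n hn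
  have hwindow : (M n : Measure (ℤ → H)).map (window m a) = windowLaw P x m (n + a).toNat :=
    map_window_eq_windowLaw hx (by omega) m
  rw [hwindow]
  exact sub_le_iff_le_add'.1 ((le_abs_self _).trans (hr m k _ A (by omega) hA))

lemma exists_shift_invariant_limit (hX : IsCompact X) (hx : ∀ n, Measurable (x n))
    (hxX : ∀ᵐ ω ∂P, ∀ n, x n ω ∈ X)
    (hr : ∀ m k k' Γ, k ≤ k' → MeasurableSet Γ →
      |(windowLaw P x m k).real Γ - (windowLaw P x m k').real Γ| ≤ r k)
    (hr0 : Filter.Tendsto r Filter.atTop (nhds 0)) :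
    ∃ μ : Measure (ℤ → H), IsProbabilityMeasure μ ∧ μ.map (fun f n => f (n + 1)) = μ ∧
      μ {f | ∀ n, f n ∈ X} = 1 ∧
      ∀ m k Γ, MeasurableSet Γ →
        |(windowLaw P x m k).real Γ - (μ.map (window m 0)).real Γ| ≤ r k := by
  obtain ⟨μ, hμ, hμX, hle⟩ := exists_abs_windowLaw_sub_window_le hX hx hxX hr
  refine ⟨μ, hμ, map_shift_eq_of_map_window_eq fun m a => ?_, hμX, fun m => hle m 0⟩
  have hlim (b : ℤ) {Γ : Set (Fin (m + 1) → H)} (hΓ : MeasurableSet Γ) :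
      Filter.Tendsto (fun k => (windowLaw P x m k).real Γ) Filter.atTop
        (nhds ((μ.map (window m b)).real Γ)) :=
    tendsto_iff_norm_sub_tendsto_zero.2
      (squeeze_zero (fun _ => norm_nonneg _) (fun k => hle m b k Γ hΓ) hr0)
  exact Measure.ext fun Γ hΓ =>
    (measureReal_eq_measureReal_iff).1 (tendsto_nhds_unique (hlim (a + 1) hΓ) (hlim a hΓ))

end Limit

end LimitMeasure

section Mixing

lemma tendsto_const_mul_exp_neg_mul_nat {γ : ℝ} (hγ : 0 < γ) (C : ℝ) :
    Filter.Tendsto (fun k : ℕ => C * Real.exp (-γ * k)) Filter.atTop (nhds 0) := by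
  have hlin := tendsto_natCast_atTop_atTop.const_mul_atTop_of_neg (neg_lt_zero.2 hγ)
  simpa using (Real.tendsto_exp_atBot.comp hlin).const_mul C

lemma mem_of_mem_msupport_past {Ω E : Type*} {mΩ : MeasurableSpace Ω} {P : Measure Ω}
    [TopologicalSpace E] [MeasurableSpace E] [SecondCountableTopology E] [OpensMeasurableSpace E]
    {η : ℤ → Ω → E} (hη : ∀ k, Measurable (η k)) {K : Set E} (hK : IsClosed K)
    (hηK : ∀ k, ∀ᵐ ω ∂P, η k ω ∈ K) {ξ : ℕ → E} (hξ : ξ ∈ msupport (P.map (past η))) (n : ℕ) :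
    ξ n ∈ K := by
  have hclosed : IsClosed (Set.pi univ fun _ : ℕ => K) := isClosed_set_pi fun _ _ => hK
  refine mem_of_mem_msupport hclosed ?_ hξ n (mem_univ n)
  refine (ae_map_iff (measurable_past hη).aemeasurable hclosed.measurableSet).2 ?_
  filter_upwards [ae_all_iff.2 hηK] with ω hω using fun n _ => hω _

variable {Ω H E : Type*} {mΩ : MeasurableSpace Ω} {P : Measure Ω} [IsProbabilityMeasure P]
  {η : ℤ → Ω → E} {X : Set H} {K : Set E} {S : H × E → H} {ι : ℝ}
  [TopologicalSpace H] [MeasurableSpace H] [NormedAddCommGroup E] [MeasureSpace E] [BorelSpace E]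

lemma exists_drivenSystem_past [SecondCountableTopology E]
    [SFinite (volume : Measure E)] [(volume : Measure E).IsOpenPosMeasure]
    (hX : IsClosed X) (hK : IsCompact K) (hS : Measurable S)
    (hmap : ∀ u ∈ X, ∀ y ∈ K, S (u, y) ∈ X) (hη : ∀ k, Measurable (η k))
    (hstat : P.map (fun ω k => η (k + 1) ω) = P.map fun ω k => η k ω)
    (hηK : ∀ k, ∀ᵐ ω ∂P, η k ω ∈ K) {Q : (ℕ → E) → Measure E}
    (hQ : ∀ ξ ∈ msupport (P.map (past η)), IsProbabilityMeasure (Q ξ))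
    (hcond : ∀ A, MeasurableSet A → ∀ B, MeasurableSet B →
      P {ω | past η ω ∈ B ∧ η 1 ω ∈ A} = ∫⁻ ω in {ω | past η ω ∈ B}, Q (past η ω) A ∂P)
    (hι : 1 < ι) {ρ : (ℕ → E) → E → ℝ} (hρ0 : ∀ ξ y, 0 ≤ ρ ξ y) {L : ℝ} (hL : 0 ≤ L)
    (hρ : ∀ ξ ∈ msupport (P.map (past η)), ∀ ξ' ∈ msupport (P.map (past η)), ∀ y y',
      |ρ ξ y - ρ ξ' y'| ≤ L * (dPast ι ξ ξ' + ‖y - y'‖))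
    (hQρ : ∀ ξ ∈ msupport (P.map (past η)),
      Q ξ = volume.withDensity fun y => ENNReal.ofReal (ρ ξ y)) :
    ∃ κ : Kernel (ℕ → E) E, IsMarkovKernel κ ∧
      DrivenSystem X K S (msupport (P.map (past η))) ι L ρ κ ∧
      (∀ ξ ∈ msupport (P.map (past η)), Q ξ = κ ξ) ∧
      (P.map (past η) ⊗ₘ κ).map (fun p => seqAppend p.1 p.2) = P.map (past η) := by
  have hσK (ξ) (hξ : ξ ∈ msupport (P.map (past η))) (n : ℕ) : ξ n ∈ K :=
    mem_of_mem_msupport_past hη hK.isClosed hηK hξ n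
  obtain ⟨κ, hκ, hκρ⟩ := exists_isMarkovKernel_withDensity
    (isClosed_msupport _).measurableSet (continuousOn_density hι hK.isBounded hσK hρ)
    fun ξ hξ => hQρ ξ hξ ▸ hQ ξ hξ
  have hQκ : ∀ ξ ∈ msupport (P.map (past η)), Q ξ = κ ξ := fun ξ hξ =>
    (hQρ ξ hξ).trans (hκρ ξ hξ).symm
  have hσ := map_seqAppend_compProd_past hη hstat ((msupport_mem_ae _).mono hQκ) hcond
  exact ⟨κ, hκ, ⟨lipschitzNoise_msupport hι hK hσK hσ hρ0 hκρ hL hρ, hX, hS, hmap⟩, hQκ, hσ⟩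

lemma DrivenSystem.exists_shift_invariant_of_oscDecay [TopologicalSpace.MetrizableSpace H]
    [SecondCountableTopology H] [BorelSpace H] [IsFiniteMeasureOnCompacts (volume : Measure E)]
    {𝓔 : Set (ℕ → E)} {L : ℝ} {ρ : (ℕ → E) → E → ℝ} {κ : Kernel (ℕ → E) E} [IsMarkovKernel κ]
    (D : DrivenSystem X K S 𝓔 ι L ρ κ) {γ C : ℝ} (hγ : 0 < γ)
    (hdecay : OscDecay X K S 𝓔 ι L κ γ C) (hX : IsCompact X) (hXne : X.Nonempty)
    (hη : ∀ k, Measurable (η k))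
    (hstat : P.map (fun ω k => η (k + 1) ω) = P.map fun ω k => η k ω)
    (hηK : ∀ k, ∀ᵐ ω ∂P, η k ω ∈ K)
    (hσ : (P.map (past η) ⊗ₘ κ).map (fun p => seqAppend p.1 p.2) = P.map (past η))
    (hσ𝓔 : ∀ᵐ ξ ∂P.map (past η), ξ ∈ 𝓔) :
    ∃ μ : Measure (ℤ → H), IsProbabilityMeasure μ ∧ μ.map (fun f n => f (n + 1)) = μ ∧
      μ {f | ∀ n, f n ∈ X} = 1 ∧ ∀ m, ∀ u ∈ X, ∀ k Γ, MeasurableSet Γ →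
        |(windowLaw P (randomTraj S u η) m k).real Γ - (μ.map (window m 0)).real Γ| ≤
          C * Real.exp (-γ * k) := by
  obtain ⟨u₀, hu₀⟩ := hXne
  have hclose {u u'} (hu : u ∈ X) (hu' : u' ∈ X) (m) {k k' : ℕ} (hk : k ≤ k')
      {Γ : Set (Fin (m + 1) → H)} (hΓ : MeasurableSet Γ) :=
    D.abs_windowLaw_sub_le hdecay hη hstat hσ hσ𝓔 hu hu' hk hΓ
  have hstates : ∀ᵐ ω ∂P, ∀ n, randomTraj S u₀ η n ω ∈ X := by
    filter_upwards [ae_all_iff.2 hηK] with ω hω using randomTraj_mem D.map_mem hu₀ hω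
  have hr0 := tendsto_const_mul_exp_neg_mul_nat hγ C
  obtain ⟨μ, hμ, hshift, hμX, hle⟩ := exists_shift_invariant_limit hX
    (measurable_randomTraj D.measurable u₀ hη) hstates
    (fun m k k' Γ hk hΓ => hclose hu₀ hu₀ m hk hΓ) hr0
  refine ⟨μ, hμ, hshift, hμX, fun m u hu k Γ hΓ => ?_⟩
  have hlim := hr0.const_add (C * Real.exp (-γ * k))
  rw [add_zero] at hlim
  refine ge_of_tendsto hlim ?_
  filter_upwards [Filter.eventually_ge_atTop k] with k' hk
  exact (abs_sub_le _ _ _).trans (add_le_add (hclose hu hu₀ m hk hΓ) (hle m k' Γ hΓ))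

end Mixing

theorem exponential_mixing_stationary_noise_general
    {H E : Type*} [NormedAddCommGroup H] [NormedSpace ℝ H] [FiniteDimensional ℝ H]
    [MeasurableSpace H] [BorelSpace H] [NormedAddCommGroup E] [NormedSpace ℝ E]
    [FiniteDimensional ℝ E] [MeasureSpace E] [BorelSpace E]
    [(volume : Measure E).IsAddHaarMeasure] {X : Set H} {K : Set E} (hX : IsCompact X)
    (hK : IsCompact K) (hXne : X.Nonempty) {S : H × E → H} (hS : ContDiff ℝ 1 S)
    (hmap : ∀ u ∈ X, ∀ y ∈ K, S (u, y) ∈ X)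
    (hdiss : ∀ ε > 0, ∃ n : ℕ, 1 ≤ n ∧ ∀ u ∈ X, ‖traj S u (fun _ => 0) n‖ ≤ ε)
    (hsurj : ∀ y ∈ K,
      Function.Surjective ((fderiv ℝ S (0, y)).comp (ContinuousLinearMap.inr ℝ H E)))
    {Ω : Type*} {mΩ : MeasurableSpace Ω} {P : Measure Ω} [IsProbabilityMeasure P]
    {η : ℤ → Ω → E} (hη : ∀ k, Measurable (η k))
    (hstat : P.map (fun ω k => η (k + 1) ω) = P.map fun ω k => η k ω)
    (hηK : ∀ k, ∀ᵐ ω ∂P, η k ω ∈ K) {Q : (ℕ → E) → Measure E}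
    (hQ : ∀ ξ ∈ msupport (P.map (past η)), IsProbabilityMeasure (Q ξ))
    (hcond : ∀ A, MeasurableSet A → ∀ B, MeasurableSet B →
      P {ω | past η ω ∈ B ∧ η 1 ω ∈ A} = ∫⁻ ω in {ω | past η ω ∈ B}, Q (past η ω) A ∂P)
    {ι : ℝ} (hι : 1 < ι)
    (hLip : ∃ ρ : (ℕ → E) → E → ℝ, (∀ ξ y, 0 ≤ ρ ξ y) ∧
      (∃ L : ℝ, 0 ≤ L ∧ ∀ ξ ∈ msupport (P.map (past η)), ∀ ξ' ∈ msupport (P.map (past η)),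
        ∀ y y', |ρ ξ y - ρ ξ' y'| ≤ L * (dPast ι ξ ξ' + ‖y - y'‖)) ∧
      ∀ ξ ∈ msupport (P.map (past η)),
        Q ξ = volume.withDensity fun y => ENNReal.ofReal (ρ ξ y))
    (hrec : RecurrentToZero Q (msupport (P.map (past η)))) :
    ∃ (μ : Measure (ℤ → H)) (γ : ℝ), IsProbabilityMeasure μ ∧ 0 < γ ∧
      μ.map (fun f n => f (n + 1)) = μ ∧ μ {f | ∀ n, f n ∈ X} = 1 ∧
      ∃ C > 0, ∀ m, ∀ u ∈ X, ∀ k Γ, MeasurableSet Γ →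
        |(windowLaw P (randomTraj S u η) m k).real Γ - (μ.map (window m 0)).real Γ| ≤
          C * Real.exp (-γ * k) := by
  obtain ⟨ρ, hρ0, ⟨L, hL, hρ⟩, hQρ⟩ := hLip
  obtain ⟨κ, hκ, D, hQκ, hσ⟩ := exists_drivenSystem_past hX.isClosed hK hS.continuous.measurable
    hmap hη hstat hηK hQ hcond hι hρ0 hL hρ hQρ
  have := Measure.isProbabilityMeasure_map (μ := P) (measurable_past hη).aemeasurable
  have hsupp := msupport_mem_ae (P.map (past η))
  obtain ⟨ξ, hξ⟩ := hsupp.exists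
  obtain ⟨u, hu⟩ := hXne
  obtain ⟨n, hn, θ, hθ, hcontr⟩ := D.exists_contraction hX hS.continuous
    (fun y _ => hS.contDiffAt.hasStrictFDerivAt one_ne_zero) hsurj hdiss hQκ hrec
    ⟨(fun _ => u, ξ), fun _ => hu, hξ⟩
  obtain ⟨γ, hγ, C, hC, hdecay⟩ := D.exists_exp_decay_of_contraction hn hθ hcontr
  obtain ⟨μ, hμ, hshift, hμX, hle⟩ :=
    D.exists_shift_invariant_of_oscDecay hγ hdecay hX ⟨u, hu⟩ hη hstat hηK hσ hsupp
  exact ⟨μ, γ, hμ, hγ, hshift, hμX, C, hC, hle⟩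

/-- **Theorem 3.1 (exponential mixing in total variation for RDS driven by a stationary
noise)**.  Let `X ⊂ H`, `K ⊂ E` be compacts containing the origins and `S : H × E → H` a `C²`
map with `S(0,0) = 0`, `S(X × K) ⊂ X`, satisfying the Dissipativity and Linearised
controllability hypotheses.  Let `{η_k, k ∈ ℤ}` be a stationary process in `E` whose laws are
supported by `K`, with conditional law `Q(ξp;·)` of `η₁` given the past `ξp`, chosen continuous
(Feller property), and assume the Lipschitz regularity and Recurrence-to-zero hypotheses.
Then there are a shift-invariant measure `μ` on `X^ℤ` and `γ > 0` such that, for every `m`,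
`‖D([u_k, …, u_{k+m}]) − μ_m‖_var ≤ C_m e^{−γk}` for every initial point `u₀ ∈ X`. -/
theorem exponential_mixing_stationary_noise
    {H E : Type*}
    [NormedAddCommGroup H] [InnerProductSpace ℝ H] [FiniteDimensional ℝ H]
    [MeasurableSpace H] [BorelSpace H]
    [NormedAddCommGroup E] [InnerProductSpace ℝ E] [FiniteDimensional ℝ E]
    [MeasureSpace E] [BorelSpace E] [(volume : Measure E).IsAddHaarMeasure]
    (X : Set H) (K : Set E) (hX : IsCompact X) (hK : IsCompact K)
    (h0X : (0 : H) ∈ X) (h0K : (0 : E) ∈ K)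
    (S : H × E → H) (hS : ContDiff ℝ 2 S) (hS0 : S (0, 0) = 0)
    (hinv : ∀ u ∈ X, ∀ η ∈ K, S (u, η) ∈ X)
    -- Dissipativity
    (hdiss : ∀ ε > 0, ∃ n : ℕ, 1 ≤ n ∧ ∀ u ∈ X, ‖traj S u (fun _ => 0) n‖ ≤ ε)
    -- Linearised controllability
    (hsurj : ∀ u ∈ X, ∀ η ∈ K,
      Function.Surjective ((fderiv ℝ S (u, η)).comp (ContinuousLinearMap.inr ℝ H E)))
    -- the stationary noise
    {Ω : Type*} {mΩ : MeasurableSpace Ω} (P : Measure Ω) [IsProbabilityMeasure P]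
    (η : ℤ → Ω → E) (hmeas : ∀ k, Measurable (η k))
    (hstat : P.map (fun ω => fun k : ℤ => η (k + 1) ω)
      = P.map (fun ω => fun k : ℤ => η k ω))
    (hsuppη : ∀ k : ℤ, ∀ᵐ ω ∂P, η k ω ∈ K)
    -- the conditional law `Q` of `η 1` given the past `𝛈_0 = (η_k, k ≤ 0)`
    (Q : (ℕ → E) → Measure E)
    (hQprob : ∀ ξp ∈ msupport (P.map (fun ω => fun n : ℕ => η (-(n : ℤ)) ω)),
      IsProbabilityMeasure (Q ξp))
    (hcond : ∀ A : Set E, MeasurableSet A → ∀ B : Set (ℕ → E), MeasurableSet B →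
      P {ω | (fun n : ℕ => η (-(n : ℤ)) ω) ∈ B ∧ η 1 ω ∈ A}
        = ∫⁻ ω in {ω | (fun n : ℕ => η (-(n : ℤ)) ω) ∈ B},
            Q (fun n : ℕ => η (-(n : ℤ)) ω) A ∂P)
    -- Feller property: `ξp ↦ Q(ξp;·)` is continuous on `ℰ = supp σ`
    (hFeller : ∀ f : BoundedContinuousFunction E ℝ,
      ContinuousOn (fun ξp => ∫ y, f y ∂(Q ξp))
        (msupport (P.map (fun ω => fun n : ℕ => η (-(n : ℤ)) ω))))
    -- Lipschitz regularity
    (ι : ℝ) (hι : 1 < ι)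
    (hLip : ∃ ρ : (ℕ → E) → E → ℝ, (∀ ξp y, 0 ≤ ρ ξp y) ∧
      (∃ L : ℝ, 0 ≤ L ∧
        ∀ ξp ∈ msupport (P.map (fun ω => fun n : ℕ => η (-(n : ℤ)) ω)),
        ∀ ξp' ∈ msupport (P.map (fun ω => fun n : ℕ => η (-(n : ℤ)) ω)),
        ∀ y y' : E, |ρ ξp y - ρ ξp' y'| ≤ L * (dPast ι ξp ξp' + ‖y - y'‖)) ∧
      ∀ ξp ∈ msupport (P.map (fun ω => fun n : ℕ => η (-(n : ℤ)) ω)),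
        Q ξp = volume.withDensity fun y => ENNReal.ofReal (ρ ξp y))
    -- Recurrence to zero
    (hrec : ∀ n : ℕ, 1 ≤ n → ∀ δ > 0, ∃ s : ℕ, 1 ≤ s ∧ ∃ c > 0,
      ∀ ξp ∈ msupport (P.map (fun ω => fun n : ℕ => η (-(n : ℤ)) ω)),
        ENNReal.ofReal c ≤ ((Qchain Q (s + n) ξp).map fun f => f ∘ Fin.natAdd s)
          {g : Fin n → E | ∀ i, ‖g i‖ < δ}) :
    ∃ (μ : Measure (ℤ → H)) (γ : ℝ), IsProbabilityMeasure μ ∧ 0 < γ ∧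
      μ.map (fun f n => f (n + 1)) = μ ∧ μ {f | ∀ n : ℤ, f n ∈ X} = 1 ∧
      ∀ m : ℕ, ∃ C > 0, ∀ u₀ ∈ X, ∀ k : ℕ,
        ∀ Γ : Set (Fin (m + 1) → H), MeasurableSet Γ →
          |(P.map (fun ω => fun i : Fin (m + 1) =>
              traj S u₀ (fun j => η (j : ℤ) ω) (k + i)) Γ).toReal
            - (μ.map (fun f => fun i : Fin (m + 1) => f (i : ℕ)) Γ).toReal|
          ≤ C * Real.exp (-γ * k) := by
  obtain ⟨μ, γ, hμ, hγ, hshift, hμX, C, hC, hle⟩ :=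
    exponential_mixing_stationary_noise_general hX hK ⟨0, h0X⟩ (hS.of_le one_le_two) hinv hdiss
      (hsurj 0 h0X) hmeas hstat hsuppη hQprob hcond hι hLip hrec
  refine ⟨μ, γ, hμ, hγ, hshift, hμX, fun m => ⟨C, hC, fun u₀ hu₀ k Γ hΓ => ?_⟩⟩
  have hle' := hle m u₀ hu₀ k Γ hΓ
  rwa [window_zero] at hle'
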